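/- arXiv:2304.04373 — 4 statements merged into one kernel-verified Lean document; each statement's English description precedes it below -/
import Mathlib

section
/- Let -∞ < a < b < ∞, let μ and w be weights on [a,b], let ν be a nonnegative finite Borel measure on [a,b] with ν[a,b] > 0, and let Φ be a Young function. Define K_{1,Φ}(μ,ν,w) := (1/ν[a,b]) · sup_{a<x<b} { (1/w(x)) · ‖ ν[a,x]·χ_{[x,b]} − ν[x,b]·χ_{[a,x]} ‖_{L_μ^Φ[a,b]} }. If K_{1,Φ}(μ,ν,w) < ∞, then for every Lipschitz continuous function f : [a,b] → ℝ one has ‖ f − (1/ν[a,b]) ∫_a^b f dν ‖_{L_μ^Φ[a,b]} ≤ 2·K_{1,Φ}(μ,ν,w) · ∫_a^b |f'(t)| w(t) dt. -/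
open MeasureTheory Set Filter
open scoped ENNReal NNReal

noncomputable section

/-- A Young function: even, convex, vanishing at `0`, nonnegative, tending to `∞`. -/
def IsYoung (Φ : ℝ → ℝ) : Prop :=
  ConvexOn ℝ Set.univ Φ ∧ (∀ t, Φ (-t) = Φ t) ∧ Φ 0 = 0 ∧ (∀ t, 0 ≤ Φ t) ∧
    Filter.Tendsto Φ Filter.atTop Filter.atTop

/-- A weight on `[a,b]`: nonnegative, measurable, positive a.e. on `[a,b]`. -/
def IsWeight (w : ℝ → ℝ) (a b : ℝ) : Prop :=
  Measurable w ∧ (∀ x, 0 ≤ w x) ∧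
    ∀ᵐ x ∂(MeasureTheory.volume.restrict (Set.Icc a b)), 0 < w x

/-- `Φ` is submultiplicative on `[0,∞)`. -/
def Submult (Φ : ℝ → ℝ) : Prop :=
  ∀ s t : ℝ, 0 ≤ s → 0 ≤ t → Φ (s * t) ≤ Φ s * Φ t

/-- `Φinv` is the inverse of `Φ` restricted to `[0,∞)`. -/
def IsYoungInv (Φ Φinv : ℝ → ℝ) : Prop :=
  (∀ t, 0 ≤ t → 0 ≤ Φinv t) ∧ (∀ t, 0 ≤ t → Φ (Φinv t) = t) ∧
    (∀ t, 0 ≤ t → Φinv (Φ t) = t)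

/-- `μ[x,y] := ∫ₓ^y μ(t) dt`, as an extended nonnegative real. -/
def wInt (μ : ℝ → ℝ) (x y : ℝ) : ℝ≥0∞ :=
  ∫⁻ t in Set.Icc x y, ENNReal.ofReal (μ t)

/-- The Luxemburg (gauge) norm of `f` on `[a,b]` w.r.t. the Young function `Φ`
and the weight `μ`: `inf {k > 0 : ∫ₐ^b Φ(f/k) μ ≤ 1}` (`∞` if no such `k`). -/
def luxNorm (Φ μ : ℝ → ℝ) (a b : ℝ) (f : ℝ → ℝ) : ℝ≥0∞ :=
  sInf {k : ℝ≥0∞ | ∃ c : ℝ, 0 < c ∧ k = ENNReal.ofReal c ∧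
    (∫⁻ x in Set.Icc a b, ENNReal.ofReal (Φ (f x / c) * μ x)) ≤ 1}

/-- `f` is Lipschitz on `[a,b]` and `f'` is a.e. its derivative on `(a,b)`. -/
def LipschitzWithDeriv (f f' : ℝ → ℝ) (a b : ℝ) : Prop :=
  (∃ K, LipschitzOnWith K f (Set.Icc a b)) ∧
    ∀ᵐ x ∂(MeasureTheory.volume.restrict (Set.Ioo a b)), HasDerivAt f (f' x) x

/-- The weighted `L^p` norm `(∫ₐ^b |g|^p w)^{1/p}`, as an extended nonnegative real. -/
def lpNorm (w : ℝ → ℝ) (p a b : ℝ) (g : ℝ → ℝ) : ℝ≥0∞ :=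
  (∫⁻ t in Set.Icc a b, ENNReal.ofReal (|g t| ^ p * w t)) ^ (1 / p)

/-- The Luxemburg (gauge) norm on a general measure space. -/
def luxNormGen {Ω : Type*} [MeasurableSpace Ω] (Φ : ℝ → ℝ) (μ : Measure Ω)
    (f : Ω → ℝ) : ℝ≥0∞ :=
  sInf {k : ℝ≥0∞ | ∃ c : ℝ, 0 < c ∧ k = ENNReal.ofReal c ∧
    (∫⁻ x, ENNReal.ofReal (Φ (f x / c)) ∂μ) ≤ 1}

/-- The Luxemburg (gauge) norm for an extended-real-valued Young function. -/
def luxNormE {Ω : Type*} [MeasurableSpace Ω] (Ψ : ℝ → ℝ≥0∞) (μ : Measure Ω)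
    (f : Ω → ℝ) : ℝ≥0∞ :=
  sInf {k : ℝ≥0∞ | ∃ c : ℝ, 0 < c ∧ k = ENNReal.ofReal c ∧
    (∫⁻ x, Ψ (f x / c) ∂μ) ≤ 1}


def opKer (ν : Measure ℝ) (a b x : ℝ) : ℝ → ℝ := fun y =>
  (ν (Set.Icc a x)).toReal * Set.indicator (Set.Icc x b) (fun _ => (1:ℝ)) y -
    (ν (Set.Icc x b)).toReal * Set.indicator (Set.Icc a x) (fun _ => (1:ℝ)) y

theorem opKer_meas (ν : Measure ℝ) [IsFiniteMeasure ν] (a b : ℝ) :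
    Measurable (fun p : ℝ × ℝ => opKer ν a b p.2 p.1) := by
  have h1 : Measurable (fun t : ℝ => (ν (Set.Icc a t)).toReal) := by
    apply Monotone.measurable
    intro s t hst
    exact ENNReal.toReal_mono (measure_ne_top _ _) (measure_mono (Icc_subset_Icc_right hst))
  have h2 : Measurable (fun t : ℝ => (ν (Set.Icc t b)).toReal) := by
    apply Antitone.measurable
    intro s t hst
    exact ENNReal.toReal_mono (measure_ne_top _ _) (measure_mono (Icc_subset_Icc_left hst))
  have h3 : Measurable (fun p : ℝ × ℝ => Set.indicator (Set.Icc p.2 b) (fun _ => (1:ℝ)) p.1) := by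
    have : MeasurableSet {p : ℝ × ℝ | p.2 ≤ p.1 ∧ p.1 ≤ b} :=
      (measurableSet_le measurable_snd measurable_fst).inter
        (measurableSet_le measurable_fst measurable_const)
    exact (measurable_const (a := (1:ℝ))).indicator this
  have h4 : Measurable (fun p : ℝ × ℝ => Set.indicator (Set.Icc a p.2) (fun _ => (1:ℝ)) p.1) := by
    have : MeasurableSet {p : ℝ × ℝ | a ≤ p.1 ∧ p.1 ≤ p.2} :=
      (measurableSet_le measurable_const measurable_fst).inter
        (measurableSet_le measurable_fst measurable_snd)
    exact (measurable_const (a := (1:ℝ))).indicator this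
  unfold opKer
  exact ((h1.comp measurable_snd).mul h3).sub ((h2.comp measurable_snd).mul h4)

theorem opKer_bdd (ν : Measure ℝ) [IsFiniteMeasure ν] (a b t x : ℝ) :
    ‖opKer ν a b t x‖ ≤ 2 * (ν Set.univ).toReal := by
  have h1 : (ν (Set.Icc a t)).toReal ≤ (ν Set.univ).toReal :=
    ENNReal.toReal_mono (measure_ne_top _ _) (measure_mono (subset_univ _))
  have h2 : (ν (Set.Icc t b)).toReal ≤ (ν Set.univ).toReal :=
    ENNReal.toReal_mono (measure_ne_top _ _) (measure_mono (subset_univ _))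
  have h3 : 0 ≤ (ν (Set.Icc a t)).toReal := ENNReal.toReal_nonneg
  have h4 : 0 ≤ (ν (Set.Icc t b)).toReal := ENNReal.toReal_nonneg
  rw [Real.norm_eq_abs, abs_le]
  unfold opKer
  simp only [Set.indicator_apply]
  split_ifs <;> constructor <;> linarith

theorem young_cont {Φ : ℝ → ℝ} (h : IsYoung Φ) : Continuous Φ := by
  have := h.1.continuousOn isOpen_univ
  exact continuousOn_univ.1 this

theorem young_scale {Φ : ℝ → ℝ} (h : IsYoung Φ) {s z : ℝ} (h0 : 0 ≤ s) (h1 : s ≤ 1) :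
    Φ (s * z) ≤ Φ z := by
  obtain ⟨hc, -, hz, hn, -⟩ := h
  have := hc.2 (mem_univ z) (mem_univ 0) h0 (sub_nonneg.2 h1) (by ring)
  simp only [smul_eq_mul, mul_zero, add_zero, hz] at this
  nlinarith [hn z]

theorem lux_lt {Φ μ : ℝ → ℝ} {a b : ℝ} (h : IsYoung Φ) (hμ : ∀ x, 0 ≤ μ x) {g : ℝ → ℝ} {c : ℝ}
    (hc : luxNorm Φ μ a b g < ENNReal.ofReal c) :
    ∫⁻ x in Set.Icc a b, ENNReal.ofReal (Φ (g x / c) * μ x) ≤ 1 := by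
  obtain ⟨k, ⟨c', h0, rfl, hle⟩, hlt⟩ := sInf_lt_iff.1 hc
  refine le_trans (lintegral_mono fun x => ENNReal.ofReal_le_ofReal ?_) hle
  have hcc : c' < c := (ENNReal.ofReal_lt_ofReal_iff_of_nonneg h0.le).1 hlt
  have hcp : 0 < c := h0.trans hcc
  refine mul_le_mul_of_nonneg_right ?_ (hμ x)
  have : g x / c = (c' / c) * (g x / c') := by field_simp
  rw [this]
  exact young_scale h (by positivity) ((div_le_one hcp).2 hcc.le)

theorem repr_half {a b : ℝ} {f : ℝ → ℝ} {L : ℝ≥0}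
    (hf : LipschitzOnWith L f (Set.Icc a b)) {y : ℝ} (hy : y ∈ Set.Icc a b) :
    ∫ t in Set.Ioo a b, deriv f t * (if y < t then (1:ℝ) else 0) = f b - f y := by
  have hac : AbsolutelyContinuousOnInterval f y b := by
    apply LipschitzOnWith.absolutelyContinuousOnInterval (K := L)
    rw [uIcc_of_le hy.2]
    exact hf.mono (Icc_subset_Icc_left hy.1)
  rw [← hac.integral_deriv_eq_sub, intervalIntegral.integral_of_le hy.2, integral_Ioc_eq_integral_Ioo]
  have : (fun t => deriv f t * (if y < t then (1:ℝ) else 0)) = (Set.Ioi y).indicator (deriv f) := by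
    ext t
    simp [Set.indicator_apply]
  rw [this, setIntegral_indicator measurableSet_Ioi]
  congr 2
  ext t
  simp only [Set.mem_inter_iff, Set.mem_Ioo, Set.mem_Ioi]
  constructor
  · rintro ⟨⟨_, h⟩, h'⟩; exact ⟨h', h⟩
  · rintro ⟨h', h⟩; exact ⟨⟨hy.1.trans_lt h', h⟩, h'⟩

theorem deriv_integrable {a b : ℝ} (hab : a < b) {f : ℝ → ℝ} {L : ℝ≥0}
    (hf : LipschitzOnWith L f (Set.Icc a b)) :
    Integrable (deriv f) (volume.restrict (Set.Ioo a b)) := by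
  have hac : AbsolutelyContinuousOnInterval f a b := by
    apply LipschitzOnWith.absolutelyContinuousOnInterval (K := L)
    rwa [uIcc_of_le hab.le]
  have := hac.intervalIntegrable_deriv
  rw [intervalIntegrable_iff_integrableOn_Ioo_of_le hab.le] at this
  exact this

theorem repr_full {a b : ℝ} (hab : a < b) {f : ℝ → ℝ} {L : ℝ≥0}
    (hf : LipschitzOnWith L f (Set.Icc a b)) (ν : Measure ℝ) [IsFiniteMeasure ν]
    {x : ℝ} (hx : x ∈ Set.Icc a b) :
    Integrable (fun t => deriv f t * opKer ν a b t x) (volume.restrict (Set.Ioo a b)) ∧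
    ∫ t in Set.Ioo a b, deriv f t * opKer ν a b t x =
      (ν (Set.Icc a b)).toReal * f x - ∫ y in Set.Icc a b, f y ∂ν := by
  have hd := deriv_integrable hab hf
  have hkm : Measurable (fun t => opKer ν a b t x) :=
    (opKer_meas ν a b).comp (measurable_const.prodMk measurable_id)
  refine ⟨hd.mul_bdd hkm.aestronglyMeasurable
    (Filter.Eventually.of_forall fun t => opKer_bdd ν a b t x), ?_⟩
  have hfi : Integrable f (ν.restrict (Set.Icc a b)) :=
    hf.continuousOn.integrableOn_compact isCompact_Icc
  set ρ := ν.restrict (Set.Icc a b) with hρ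
  have hprod : Integrable (Function.uncurry fun (y t : ℝ) => deriv f t * (if y < t then (1:ℝ) else 0))
      (ρ.prod (volume.restrict (Set.Ioo a b))) := by
    have h1 : Integrable (fun p : ℝ × ℝ => deriv f p.2) (ρ.prod (volume.restrict (Set.Ioo a b))) :=
      hd.comp_snd ρ
    refine h1.mul_bdd (c := 1) ?_ (Filter.Eventually.of_forall fun p => ?_)
    · exact (Measurable.ite (measurableSet_lt measurable_fst measurable_snd)
        measurable_const measurable_const).aestronglyMeasurable
    · split_ifs <;> simp
  have hsw := integral_integral_swap hprod
  have hl : ∫ y, (∫ t in Set.Ioo a b, deriv f t * (if y < t then (1:ℝ) else 0)) ∂ρ =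
      (ν (Set.Icc a b)).toReal * f b - ∫ y, f y ∂ρ := by
    have : ∫ y, (∫ t in Set.Ioo a b, deriv f t * (if y < t then (1:ℝ) else 0)) ∂ρ =
        ∫ y, (f b - f y) ∂ρ :=
      setIntegral_congr_fun measurableSet_Icc fun y hy => repr_half hf hy
    rw [this, integral_sub (integrable_const _) hfi]
    simp [hρ, measureReal_def]
  have hr : ∀ t, ∫ y, deriv f t * (if y < t then (1:ℝ) else 0) ∂ρ =
      deriv f t * (ρ (Set.Iio t)).toReal := by
    intro t
    rw [integral_const_mul]
    congr 1
    have : (fun y : ℝ => if y < t then (1:ℝ) else 0) = (Set.Iio t).indicator (fun _ => (1:ℝ)) := by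
      ext y; simp [Set.indicator_apply]
    rw [this, integral_indicator measurableSet_Iio]
    simp [measureReal_def]
  simp_rw [hr] at hsw
  rw [hl] at hsw
  have hx' := repr_half hf hx
  have hint1 : Integrable (fun t => deriv f t * (ρ (Set.Iio t)).toReal)
      (volume.restrict (Set.Ioo a b)) := by
    have := hprod.integral_prod_right
    simpa only [Function.uncurry_apply_pair, hr] using this
  have hint2 : Integrable (fun t => deriv f t * (if x < t then (1:ℝ) else 0))
      (volume.restrict (Set.Ioo a b)) := by
    refine hd.mul_bdd (c := 1) ?_ (Filter.Eventually.of_forall fun p => ?_)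
    · exact (Measurable.ite measurableSet_Ioi
        measurable_const measurable_const).aestronglyMeasurable
    · split_ifs <;> simp
  have hatoms : ∀ᵐ t : ℝ, ν {t} = 0 := by
    have hc := Measure.countable_meas_level_set_pos (μ := ν) (g := fun t : ℝ => t) measurable_id
    filter_upwards [hc.ae_notMem volume] with t ht
    simpa using ht
  have hne : ∀ᵐ t : ℝ, t ≠ x := by
    filter_upwards [(countable_singleton x).ae_notMem volume] with t ht using ht
  have hae : (fun t => deriv f t * opKer ν a b t x) =ᵐ[volume.restrict (Set.Ioo a b)]
      fun t => deriv f t * (ρ (Set.Iio t)).toReal -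
        (ν (Set.Icc a b)).toReal * (deriv f t * (if x < t then (1:ℝ) else 0)) := by
    filter_upwards [ae_restrict_of_ae hatoms, ae_restrict_of_ae hne,
      ae_restrict_mem measurableSet_Ioo] with t h1 h2 ht
    have e1 : ρ (Set.Iio t) = ν (Set.Ico a t) := by
      rw [hρ, Measure.restrict_apply measurableSet_Iio]
      congr 1
      ext y
      simp only [Set.mem_inter_iff, Set.mem_Iio, Set.mem_Icc, Set.mem_Ico]
      constructor
      · rintro ⟨h, h', _⟩; exact ⟨h', h⟩
      · rintro ⟨h', h⟩; exact ⟨h, h', h.le.trans ht.2.le⟩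
    have e2 : ν (Set.Icc a t) = ν (Set.Ico a t) := by
      rw [← Set.Ico_union_right ht.1.le]
      refine le_antisymm ((measure_union_le _ _).trans (by simp [h1])) (measure_mono subset_union_left)
    have e3 : (ν (Set.Icc a b)).toReal = (ν (Set.Ico a t)).toReal + (ν (Set.Icc t b)).toReal := by
      rw [← ENNReal.toReal_add (measure_ne_top _ _) (measure_ne_top _ _),
        ← measure_union _ measurableSet_Icc, Set.Ico_union_Icc_eq_Icc ht.1.le ht.2.le]
      rw [Set.disjoint_left]
      rintro y hy hy'
      exact absurd hy'.1 (not_le.2 hy.2)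
    unfold opKer
    rw [e1, e2, e3]
    simp only [Set.indicator_apply, Set.mem_Icc]
    rcases lt_or_gt_of_ne h2 with h | h
    · have : ¬ x ≤ t := not_le.2 h
      have : ¬ x < t := not_lt.2 h.le
      simp [*, h.le, hx.2]
    · have : ¬ t ≤ x := not_le.2 h
      simp [*, h.le, hx.1]
      ring
  rw [integral_congr_ae hae, integral_sub hint1 (hint2.const_mul _), integral_const_mul, hx', ← hsw]
  ring

theorem core_est {Φ μ w h : ℝ → ℝ} {a b : ℝ} (hΦ : IsYoung Φ) (hμm : Measurable μ)
    (hμ : ∀ x, 0 ≤ μ x) (hwm : Measurable w) (ν : Measure ℝ) [IsFiniteMeasure ν]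
    {S N I : ℝ} (hS : 0 ≤ S) (hN : 0 < N)
    (hk : ∀ᵐ t ∂(volume.restrict (Set.Ioo a b)),
      0 < w t ∧ luxNorm Φ μ a b (opKer ν a b t) ≤ ENNReal.ofReal (S * w t))
    (hm : Measurable h)
    (hI : Integrable (fun t => |h t| * w t) (volume.restrict (Set.Ioo a b)))
    (hIeq : ∫ t in Set.Ioo a b, |h t| * w t = I) (hIpos : 0 < I) {g : ℝ → ℝ}
    (hg : ∀ x ∈ Set.Icc a b,
      Integrable (fun t => h t * opKer ν a b t x) (volume.restrict (Set.Ioo a b)) ∧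
      ∫ t in Set.Ioo a b, h t * opKer ν a b t x = N * g x) :
    luxNorm Φ μ a b g ≤ ENNReal.ofReal (S * I / N) := by
  have key : ∀ T, S < T → luxNorm Φ μ a b g ≤ ENNReal.ofReal (T * I / N) := by
    intro T hST
    have hT : 0 < T := hS.trans_lt hST
    apply sInf_le
    refine ⟨T * I / N, by positivity, rfl, ?_⟩
    set m := volume.restrict (Set.Ioo a b) with hmdef
    set d : ℝ → ℝ≥0∞ := fun t => ENNReal.ofReal (|h t| * w t / I) with hd
    have hdm : Measurable d := by
      apply Measurable.ennreal_ofReal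
      exact ((hm.norm).mul hwm).div_const I
    have hdfin : ∀ᵐ t ∂m, d t < ⊤ := Filter.Eventually.of_forall fun t => ENNReal.ofReal_lt_top
    set P := m.withDensity d with hP
    have hnn : 0 ≤ᵐ[m] fun t => |h t| * w t / I := by
      filter_upwards [hk] with t ht
      have := ht.1
      positivity
    have hPprob : IsProbabilityMeasure P := by
      constructor
      rw [hP, withDensity_apply _ MeasurableSet.univ, Measure.restrict_univ,
        ← ofReal_integral_eq_lintegral_ofReal (hI.div_const I) hnn, integral_div, hIeq,
        div_self hIpos.ne', ENNReal.ofReal_one]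
    have hac : P ≪ m := withDensity_absolutelyContinuous _ _
    set sg : ℝ → ℝ := fun t => if 0 < h t then 1 else -1 with hsg
    have hsgm : Measurable sg := Measurable.ite (measurableSet_lt measurable_const hm)
      measurable_const measurable_const
    have hsgh : ∀ t, sg t * |h t| = h t := by
      intro t
      simp only [hsg]
      split_ifs with h0
      · rw [abs_of_pos h0, one_mul]
      · rw [abs_of_nonpos (not_lt.1 h0)]; ring
    set G : ℝ → ℝ → ℝ := fun x t => sg t * (opKer ν a b t x / (T * w t)) with hG
    have hGm : Measurable (Function.uncurry G) := by
      have h1 := opKer_meas ν a b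
      exact (hsgm.comp measurable_snd).mul (h1.div (measurable_const.mul (hwm.comp measurable_snd)))
    have hΦG : ∀ x t, Φ (G x t) = Φ (opKer ν a b t x / (T * w t)) := by
      intro x t
      simp only [hG, hsg]
      split_ifs
      · rw [one_mul]
      · rw [neg_one_mul, hΦ.2.1]
    have hGint : ∀ x ∈ Set.Icc a b, Integrable (G x) P ∧ ∫ t, G x t ∂P = g x / (T * I / N) := by
      intro x hx
      obtain ⟨i1, i2⟩ := hg x hx
      have e : (fun t => (d t).toReal • G x t) =ᵐ[m]
          fun t => (h t * opKer ν a b t x) / (T * I) := by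
        filter_upwards [hk, hnn] with t ht ht'
        have hw := ht.1
        simp only [hd, hG, smul_eq_mul]
        rw [ENNReal.toReal_ofReal ht']
        nth_rewrite 2 [← hsgh t]
        field_simp
      constructor
      · rw [hP, integrable_withDensity_iff_integrable_smul' hdm hdfin]
        exact (i1.div_const (T * I)).congr e.symm
      · rw [hP, integral_withDensity_eq_integral_toReal_smul hdm hdfin, integral_congr_ae e,
          integral_div, i2]
        field_simp
    have hjen : ∀ x ∈ Set.Icc a b, ENNReal.ofReal (Φ (g x / (T * I / N)) * μ x) ≤
        ∫⁻ t, ENNReal.ofReal (Φ (G x t) * μ x) ∂P := by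
      intro x hx
      obtain ⟨i1, i2⟩ := hGint x hx
      have hGx : Measurable (G x) := hGm.comp (measurable_const.prodMk measurable_id)
      have hPhi : Measurable fun t => Φ (G x t) := (young_cont hΦ).measurable.comp hGx
      have : ∀ z : ℝ, ENNReal.ofReal (Φ z * μ x) = ENNReal.ofReal (Φ z) * ENNReal.ofReal (μ x) :=
        fun z => ENNReal.ofReal_mul (hΦ.2.2.2.1 z)
      simp_rw [this]
      rw [lintegral_mul_const _ hPhi.ennreal_ofReal]
      gcongr
      by_cases hfin : ∫⁻ t, ENNReal.ofReal (Φ (G x t)) ∂P = ⊤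
      · rw [hfin]; exact le_top
      · have hPi : Integrable (fun t => Φ (G x t)) P := by
          refine ⟨hPhi.aestronglyMeasurable, ?_⟩
          rw [hasFiniteIntegral_iff_ofReal (Filter.Eventually.of_forall fun t => hΦ.2.2.2.1 _)]
          exact lt_top_iff_ne_top.2 hfin
        rw [← ofReal_integral_eq_lintegral_ofReal hPi
          (Filter.Eventually.of_forall fun t => hΦ.2.2.2.1 _)]
        apply ENNReal.ofReal_le_ofReal
        rw [← i2]
        exact hΦ.1.map_integral_le (young_cont hΦ).continuousOn isClosed_univ
          (Filter.Eventually.of_forall fun t => mem_univ _) i1 hPi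
    calc ∫⁻ x in Set.Icc a b, ENNReal.ofReal (Φ (g x / (T * I / N)) * μ x)
        ≤ ∫⁻ x in Set.Icc a b, (∫⁻ t, ENNReal.ofReal (Φ (G x t) * μ x) ∂P) :=
          setLIntegral_mono' measurableSet_Icc hjen
      _ = ∫⁻ t, (∫⁻ x in Set.Icc a b, ENNReal.ofReal (Φ (G x t) * μ x)) ∂P := by
          apply lintegral_lintegral_swap
          apply Measurable.aemeasurable
          apply Measurable.ennreal_ofReal
          exact ((young_cont hΦ).measurable.comp hGm).mul (hμm.comp measurable_fst)
      _ ≤ ∫⁻ t, 1 ∂P := by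
          apply lintegral_mono_ae
          filter_upwards [hac.ae_le hk] with t ht
          simp_rw [hΦG]
          apply lux_lt hΦ hμ
          refine ht.2.trans_lt ?_
          have := ht.1
          exact (ENNReal.ofReal_lt_ofReal_iff (by positivity)).2 (by gcongr)
      _ = 1 := by simp
  have hcont : Tendsto (fun T : ℝ => ENNReal.ofReal (T * I / N)) (nhdsWithin S (Set.Ioi S))
      (nhds (ENNReal.ofReal (S * I / N))) := by
    apply tendsto_nhdsWithin_of_tendsto_nhds
    apply Continuous.tendsto
    exact ENNReal.continuous_ofReal.comp (by fun_prop)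
  refine ge_of_tendsto hcont ?_
  filter_upwards [self_mem_nhdsWithin] with T hT using key T hT

theorem core_all {Φ μ w h : ℝ → ℝ} {a b : ℝ} (hΦ : IsYoung Φ) (hμm : Measurable μ)
    (hμ : ∀ x, 0 ≤ μ x) (hwm : Measurable w) (ν : Measure ℝ) [IsFiniteMeasure ν]
    {S N : ℝ} (hS : 0 ≤ S) (hN : 0 < N)
    (hk : ∀ᵐ t ∂(volume.restrict (Set.Ioo a b)),
      0 < w t ∧ luxNorm Φ μ a b (opKer ν a b t) ≤ ENNReal.ofReal (S * w t))
    (hm : Measurable h)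
    (hI : Integrable (fun t => |h t| * w t) (volume.restrict (Set.Ioo a b)))
    {g : ℝ → ℝ}
    (hg : ∀ x ∈ Set.Icc a b,
      Integrable (fun t => h t * opKer ν a b t x) (volume.restrict (Set.Ioo a b)) ∧
      ∫ t in Set.Ioo a b, h t * opKer ν a b t x = N * g x) :
    luxNorm Φ μ a b g ≤ ENNReal.ofReal (S * (∫ t in Set.Ioo a b, |h t| * w t) / N) := by
  have hnn : 0 ≤ᵐ[volume.restrict (Set.Ioo a b)] fun t => |h t| * w t := by
    filter_upwards [hk] with t ht
    have := ht.1
    positivity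
  rcases (integral_nonneg_of_ae hnn).lt_or_eq with h0 | h0
  · exact core_est hΦ hμm hμ hwm ν hS hN hk hm hI rfl h0 hg
  · have hz := (integral_eq_zero_iff_of_nonneg_ae hnn hI).1 h0.symm
    have hg0 : ∀ x ∈ Set.Icc a b, g x = 0 := by
      intro x hx
      have h1 := (hg x hx).2
      have : (fun t => h t * opKer ν a b t x) =ᵐ[volume.restrict (Set.Ioo a b)] 0 := by
        filter_upwards [hz, hk] with t h2 h3
        have : h t = 0 := by
          have h4 : |h t| * w t = 0 := h2
          rcases mul_eq_zero.1 h4 with h5 | h5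
          · exact abs_eq_zero.1 h5
          · exact absurd h5 h3.1.ne'
        simp [this]
      rw [integral_congr_ae this] at h1
      simp only [Pi.zero_apply, integral_zero] at h1
      exact (mul_eq_zero.1 h1.symm).resolve_left hN.ne'
    rw [← h0]
    simp only [mul_zero, zero_div, ENNReal.ofReal_zero]
    refine le_of_forall_gt fun c hc => ?_
    obtain ⟨r, hr0, hrc⟩ : ∃ r : ℝ, 0 < r ∧ ENNReal.ofReal r < c := by
      obtain ⟨q, h1, h2⟩ := ENNReal.lt_iff_exists_real_btwn.1 hc
      exact ⟨q, by simpa using h2.1, h2.2⟩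
    refine lt_of_le_of_lt (sInf_le ⟨r, hr0, rfl, ?_⟩) hrc
    rw [setLIntegral_congr_fun (g := fun _ => 0) measurableSet_Icc]
    · simp
    · intro x hx
      simp [hg0 x hx, hΦ.2.2.1]

/-- Sufficiency of `K_{1,Φ}(μ,ν,w) < ∞` for the `(Φ,1)` Orlicz–Poincaré inequality. -/
theorem orlicz_poincare_p_eq_one_sufficient
    (a b : ℝ) (hab : a < b) (Φ μ w : ℝ → ℝ)
    (hΦ : IsYoung Φ) (hμ : IsWeight μ a b) (hw : IsWeight w a b)
    (ν : Measure ℝ) [IsFiniteMeasure ν] (hν : 0 < ν (Set.Icc a b))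
    (K : ℝ≥0∞)
    (hK : K = (ν (Set.Icc a b))⁻¹ *
      ⨆ x ∈ Set.Ioo a b, (ENNReal.ofReal (w x))⁻¹ *
        luxNorm Φ μ a b (fun y =>
          (ν (Set.Icc a x)).toReal * Set.indicator (Set.Icc x b) (fun _ => (1:ℝ)) y -
            (ν (Set.Icc x b)).toReal * Set.indicator (Set.Icc a x) (fun _ => (1:ℝ)) y))
    (hKfin : K < ⊤) :
    ∀ f f' : ℝ → ℝ, LipschitzWithDeriv f f' a b →
      luxNorm Φ μ a b
        (fun x => f x - (ν (Set.Icc a b)).toReal⁻¹ * ∫ y in Set.Icc a b, f y ∂ν)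
        ≤ 2 * K * ∫⁻ t in Set.Icc a b, ENNReal.ofReal (|f' t| * w t) := by
  intro f f' hff
  obtain ⟨⟨L, hL⟩, hder⟩ := hff
  set Nn := ν (Set.Icc a b) with hNn
  have hNtop : Nn ≠ ⊤ := measure_ne_top _ _
  have hN : 0 < Nn.toReal := ENNReal.toReal_pos hν.ne' hNtop
  set Sup : ℝ≥0∞ := ⨆ x ∈ Set.Ioo a b, (ENNReal.ofReal (w x))⁻¹ *
        luxNorm Φ μ a b (opKer ν a b x) with hSup
  have hK' : K = Nn⁻¹ * Sup := hK
  have hSfin : Sup ≠ ⊤ := by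
    intro h
    rw [h, ENNReal.mul_top (ENNReal.inv_ne_zero.2 hNtop)] at hK'
    exact hKfin.ne hK'
  have hsub : Set.Ioo a b ⊆ Set.Icc a b := Ioo_subset_Icc_self
  have hwpos : ∀ᵐ t ∂(volume.restrict (Set.Ioo a b)), 0 < w t :=
    ae_restrict_of_ae_restrict_of_subset hsub hw.2.2
  have hk : ∀ᵐ t ∂(volume.restrict (Set.Ioo a b)),
      0 < w t ∧ luxNorm Φ μ a b (opKer ν a b t) ≤ ENNReal.ofReal (Sup.toReal * w t) := by
    filter_upwards [hwpos, ae_restrict_mem measurableSet_Ioo] with t h1 h2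
    refine ⟨h1, ?_⟩
    have h3 : (ENNReal.ofReal (w t))⁻¹ * luxNorm Φ μ a b (opKer ν a b t) ≤ Sup :=
      le_iSup₂ (f := fun x (_ : x ∈ Set.Ioo a b) => (ENNReal.ofReal (w x))⁻¹ *
        luxNorm Φ μ a b (opKer ν a b x)) t h2
    rw [ENNReal.ofReal_mul ENNReal.toReal_nonneg, ENNReal.ofReal_toReal hSfin]
    rw [mul_comm, ← div_eq_mul_inv] at h3
    exact (ENNReal.div_le_iff (ENNReal.ofReal_pos.2 h1).ne' ENNReal.ofReal_ne_top).1 h3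
  have hg : ∀ x ∈ Set.Icc a b,
      Integrable (fun t => deriv f t * opKer ν a b t x) (volume.restrict (Set.Ioo a b)) ∧
      ∫ t in Set.Ioo a b, deriv f t * opKer ν a b t x =
        Nn.toReal * (f x - Nn.toReal⁻¹ * ∫ y in Set.Icc a b, f y ∂ν) := by
    intro x hx
    obtain ⟨h1, h2⟩ := repr_full hab hL ν hx
    refine ⟨h1, h2.trans ?_⟩
    rw [mul_sub, ← mul_assoc, mul_inv_cancel₀ hN.ne', one_mul]
  have hdm : Measurable (deriv f) := measurable_deriv f
  have hdi := deriv_integrable hab hL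
  have hIeq : ∫⁻ t in Set.Icc a b, ENNReal.ofReal (|f' t| * w t) =
      ∫⁻ t in Set.Ioo a b, ENNReal.ofReal (|deriv f t| * w t) := by
    rw [← restrict_Ioo_eq_restrict_Icc]
    apply lintegral_congr_ae
    filter_upwards [hder] with t ht
    rw [ht.deriv]
  rw [hIeq]
  have hmeas : Measurable (fun t => |deriv f t| * w t) := (hdm.norm).mul hw.1
  have hnn : ∀ t, 0 ≤ |deriv f t| * w t := fun t => mul_nonneg (abs_nonneg _) (hw.2.1 t)
  by_cases hItop : ∫⁻ t in Set.Ioo a b, ENNReal.ofReal (|deriv f t| * w t) = ⊤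
  · by_cases hK0 : K = 0
    · have hS0 : Sup = 0 := by
        rw [hK0] at hK'
        exact (mul_eq_zero.1 hK'.symm).resolve_left (ENNReal.inv_ne_zero.2 hNtop)
      have hk1 : ∀ᵐ t ∂(volume.restrict (Set.Ioo a b)),
          0 < (fun _ => (1:ℝ)) t ∧
            luxNorm Φ μ a b (opKer ν a b t) ≤ ENNReal.ofReal (0 * (fun _ => (1:ℝ)) t) := by
        filter_upwards [hk] with t ht
        refine ⟨one_pos, ?_⟩
        simpa [hS0] using ht.2
      have := core_all hΦ hμ.1 hμ.2.1 measurable_const ν le_rfl hN hk1 hdm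
        (by simpa using hdi.abs) hg
      refine this.trans ?_
      simp
    · rw [hItop, ENNReal.mul_top (mul_ne_zero two_ne_zero hK0)]
      exact le_top
  · have hI : Integrable (fun t => |deriv f t| * w t) (volume.restrict (Set.Ioo a b)) := by
      refine ⟨hmeas.aestronglyMeasurable, ?_⟩
      rw [hasFiniteIntegral_iff_ofReal (Filter.Eventually.of_forall hnn)]
      exact lt_top_iff_ne_top.2 hItop
    have := core_all hΦ hμ.1 hμ.2.1 hw.1 ν ENNReal.toReal_nonneg hN hk hdm hI hg
    refine this.trans ?_
    rw [← ofReal_integral_eq_lintegral_ofReal hI (Filter.Eventually.of_forall hnn),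
      ENNReal.ofReal_div_of_pos hN, ENNReal.ofReal_mul ENNReal.toReal_nonneg,
      ENNReal.ofReal_toReal hSfin, ENNReal.ofReal_toReal hNtop, hK', div_eq_mul_inv]
    calc _ = 1 * (Nn⁻¹ * Sup) * ENNReal.ofReal (∫ t in Set.Ioo a b, |deriv f t| * w t) := by ring
      _ ≤ _ := by
        gcongr
        exact one_le_two
end
end

section
/- Let -∞ < a < b < ∞, 1 < p < ∞ with conjugate exponent p' = p/(p−1), let μ and w be weights on [a,b], and let ν be a nonnegative finite Borel measure on [a,b] with ν[a,b] > 0. Let Φ be a Young function that is submultiplicative and invertible on [0,∞), and assume the function Λ(t) = Φ(t^{1/p}) is convex. Define K_{p,Φ}(μ,ν,w) := (1/ν[a,b]) · ( sup_{a<x<b} [Φ^{-1}(μ[x,b]^{-1/2})]^{-2} (∫_a^x ν[a,t]^{p'} w(t)^{1−p'} dt)^{1/p'} + sup_{a<x<b} [Φ^{-1}(μ[a,x]^{-1/2})]^{-2} (∫_x^b ν[t,b]^{p'} w(t)^{1−p'} dt)^{1/p'} ). If K_{p,Φ}(μ,ν,w) < ∞, then for every Lipschitz continuous function f : [a,b]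 → ℝ, ‖ f − (1/ν[a,b]) ∫_a^b f dν ‖_{L_μ^Φ[a,b]} ≤ C₀(Φ) · K_{p,Φ}(μ,ν,w) · ‖f'‖_{L_w^p[a,b]}, where C₀(Φ) := 2·[Φ^{-1}(1/2)]^{-1}. -/
open MeasureTheory Set Filter
open scoped ENNReal NNReal

noncomputable section

lemma aux_Iic (κ : Measure ℝ) (c : ℝ≥0∞) : κ {t | κ {s | s ≤ t} < c} ≤ c := by
  set A := {t | κ {s | s ≤ t} < c} with hA
  rcases A.eq_empty_or_nonempty with h0 | hne
  · simp [h0]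
  have key : ∀ u : ℕ → ℝ, Monotone u → (∀ n, κ {s | s ≤ u n} ≤ c) → A ⊆ ⋃ n, {s | s ≤ u n} →
      κ A ≤ c := by
    intro u hu hc hs
    refine (measure_mono hs).trans ?_
    rw [Monotone.measure_iUnion]
    · exact iSup_le hc
    · intro i j hij x hx
      exact le_trans hx (hu hij)
  by_cases hb : BddAbove A
  · have hl := isLUB_csSup hne hb
    by_cases hm : sSup A ∈ A
    · exact (measure_mono (fun t ht => hl.1 ht)).trans (le_of_lt hm)
    · obtain ⟨u, hu, -, hlim, hmem⟩ := hl.exists_seq_monotone_tendsto hne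
      refine key u hu (fun n => (hmem n).le) ?_
      intro t ht
      have : t < sSup A := lt_of_le_of_ne (hl.1 ht) (fun h => hm (h ▸ ht))
      obtain ⟨n, hn⟩ := (hlim.eventually (lt_mem_nhds this)).exists
      exact mem_iUnion.2 ⟨n, hn.le⟩
  · refine key (fun n => (n : ℝ)) (fun i j h => by simpa using h) (fun n => ?_) ?_
    · rw [not_bddAbove_iff] at hb
      obtain ⟨y, hy, hny⟩ := hb n
      exact (measure_mono (fun s hs => le_trans hs hny.le)).trans hy.le
    · intro t _
      obtain ⟨n, hn⟩ := exists_nat_ge t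
      exact mem_iUnion.2 ⟨n, hn⟩

lemma aux_Ici (κ : Measure ℝ) (c : ℝ≥0∞) : κ {t | κ {s | t ≤ s} < c} ≤ c := by
  have h := aux_Iic (κ.map (fun x => -x)) c
  have e : MeasurableEmbedding (fun x : ℝ => -x) := (Homeomorph.neg ℝ).measurableEmbedding
  simp only [e.map_apply] at h
  convert h using 2
  ext t
  simp only [mem_ofPred_eq, preimage_ofPred_eq]
  simp

lemma aux_layer {α : Type*} [MeasurableSpace α] (κ : Measure α) (V : α → ℝ≥0∞) (hV : Measurable V)
    (h : ∀ c, κ {t | V t < c} ≤ c) :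
    ∫⁻ t, (V t) ^ (-(1/2) : ℝ) ∂κ ≤ 2 * (κ univ) ^ (1/2 : ℝ) := by
  by_cases hM0 : κ univ = 0
  · have : κ = 0 := Measure.measure_univ_eq_zero.1 hM0
    simp [this]
  by_cases hMt : κ univ = ⊤
  · simp [hMt]
  have hnull : κ {t | V t = 0} = 0 := by
    refine le_antisymm (ENNReal.le_of_forall_pos_le_add ?_) zero_le
    intro ε hε _
    rw [zero_add]
    refine (measure_mono ?_).trans (h ε)
    intro t ht
    simp only [mem_ofPred_eq] at ht ⊢
    rw [ht]; exact_mod_cast hε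
  have hae : ∀ᵐ t ∂κ, V t ≠ 0 := by simpa [ae_iff] using hnull
  set M := (κ univ).toReal with hM
  have hMpos : 0 < M := ENNReal.toReal_pos hM0 hMt
  have hMe : κ univ = ENNReal.ofReal M := (ENNReal.ofReal_toReal hMt).symm
  have e1 : ∫⁻ t, (V t) ^ (-(1/2) : ℝ) ∂κ
      = ∫⁻ t, ENNReal.ofReal ((V t) ^ (-(1/2) : ℝ)).toReal ∂κ := by
    refine lintegral_congr_ae ?_
    filter_upwards [hae] with t ht
    rw [ENNReal.ofReal_toReal]
    rw [ENNReal.rpow_neg]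
    simp [ht]
  rw [e1, lintegral_eq_lintegral_meas_lt _ (ae_of_all _ fun _ => ENNReal.toReal_nonneg)
    (by fun_prop)]
  have hc : 0 < M ^ (-(1/2) : ℝ) := by positivity
  have hsplit : Ioi (0:ℝ) = Ioc 0 (M ^ (-(1/2) : ℝ)) ∪ Ioi (M ^ (-(1/2) : ℝ)) :=
    (Ioc_union_Ioi_eq_Ioi hc.le).symm
  rw [hsplit]
  refine (lintegral_union_le _ _ _).trans ?_
  have b1 : ∫⁻ s in Ioc 0 (M ^ (-(1/2) : ℝ)), κ {x | s < ((V x) ^ (-(1/2) : ℝ)).toReal}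
      ≤ ENNReal.ofReal (M ^ (1/2 : ℝ)) := by
    calc _ ≤ ∫⁻ s in Ioc 0 (M ^ (-(1/2) : ℝ)), κ univ :=
          lintegral_mono fun s => measure_mono (subset_univ _)
      _ = ENNReal.ofReal (M ^ (1/2 : ℝ)) := by
          rw [setLIntegral_const, Real.volume_Ioc, hMe, ← ENNReal.ofReal_mul hMpos.le]
          congr 1
          rw [sub_zero]
          nth_rewrite 1 [← Real.rpow_one M]
          rw [← Real.rpow_add hMpos]; norm_num
  have b2 : ∫⁻ s in Ioi (M ^ (-(1/2) : ℝ)), κ {x | s < ((V x) ^ (-(1/2) : ℝ)).toReal}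
      ≤ ENNReal.ofReal (M ^ (1/2 : ℝ)) := by
    calc _ ≤ ∫⁻ s in Ioi (M ^ (-(1/2) : ℝ)), ENNReal.ofReal (s ^ (-2 : ℝ)) := by
          refine setLIntegral_mono' measurableSet_Ioi fun s hs => ?_
          have hs0 : 0 < s := hc.trans hs
          refine (measure_mono ?_).trans (h _)
          intro x hx
          simp only [mem_ofPred_eq] at hx ⊢
          have h1 : ENNReal.ofReal s < (V x) ^ (-(1/2) : ℝ) :=
            (ENNReal.ofReal_lt_iff_lt_toReal hs0.le (by
              intro htop; rw [htop] at hx; simp at hx; linarith)).2 hx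
          rw [← ENNReal.ofReal_rpow_of_pos hs0]
          have h2 := ENNReal.rpow_lt_rpow h1 (z := 2) (by norm_num)
          rw [← ENNReal.rpow_mul] at h2
          norm_num at h2
          rw [ENNReal.rpow_neg_one] at h2
          rw [ENNReal.rpow_neg]
          have := ENNReal.inv_lt_inv.2 h2
          simpa using this
      _ = ENNReal.ofReal (M ^ (1/2 : ℝ)) := by
          rw [← ofReal_integral_eq_lintegral_ofReal
            (integrableOn_Ioi_rpow_of_lt (by norm_num) hc)
            ((ae_restrict_mem measurableSet_Ioi).mono fun s hs => by
              have : 0 < s := hc.trans hs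
              simp only [Pi.zero_apply]; positivity)]
          rw [integral_Ioi_rpow_of_lt (by norm_num) hc, ← Real.rpow_mul hMpos.le]
          norm_num
  refine (add_le_add b1 b2).trans ?_
  rw [← two_mul, hMe, ENNReal.ofReal_rpow_of_pos hMpos]

lemma aux_subgrad (f : ℝ → ℝ) (hf : ConvexOn ℝ univ f) (x : ℝ) :
    ∃ s, ∀ y, f x + s * (y - x) ≤ f y := by
  have hx : x ∈ interior (univ : Set ℝ) := by simp
  refine ⟨derivWithin f (Ioi x) x, fun y => ?_⟩
  rcases lt_trichotomy y x with h | h | h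
  · have h1 := hf.slope_le_leftDeriv (mem_univ y) (mem_univ x) h
      (hf.differentiableWithinAt_Iio_of_mem_interior hx)
    have h2 := h1.trans (hf.leftDeriv_le_rightDeriv_of_mem_interior hx)
    rw [slope_def_field, div_le_iff₀ (by linarith)] at h2
    linarith
  · simp [h]
  · have h1 := hf.rightDeriv_le_slope (mem_univ x) (mem_univ y) h
      (hf.differentiableWithinAt_Ioi_of_mem_interior hx)
    rw [slope_def_field, le_div_iff₀ (by linarith)] at h1
    linarith

lemma aux_jensen {α : Type*} [MeasurableSpace α] (lam : Measure α) (hlam : lam univ ≤ 1)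
    (Λ : ℝ → ℝ) (hΛ : ConvexOn ℝ univ Λ) (h0 : Λ 0 = 0) (hnn : ∀ y, 0 ≤ Λ y)
    (h : α → ℝ) (hm : Measurable h) (y0 : ℝ) (hy0 : 0 ≤ y0)
    (hy : ENNReal.ofReal y0 ≤ ∫⁻ t, ENNReal.ofReal (h t) ∂lam) :
    ENNReal.ofReal (Λ y0) ≤ ∫⁻ t, ENNReal.ofReal (Λ (h t)) ∂lam := by
  rcases hy0.eq_or_lt with rfl | hpos
  · simp [h0]
  obtain ⟨s, hs⟩ := aux_subgrad Λ hΛ y0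
  have hs0 := hs 0
  rw [h0] at hs0
  have hsnn : 0 ≤ s := by
    by_contra hneg
    push Not at hneg
    have := hnn y0
    nlinarith
  set d := s * y0 - Λ y0 with hd
  have hd0 : 0 ≤ d := by linarith
  have h1 : ENNReal.ofReal s * ENNReal.ofReal y0 ≤
      ∫⁻ t, ENNReal.ofReal (Λ (h t)) ∂lam + ENNReal.ofReal d := by
    calc _ ≤ ENNReal.ofReal s * ∫⁻ t, ENNReal.ofReal (h t) ∂lam := by gcongr
      _ = ∫⁻ t, ENNReal.ofReal s * ENNReal.ofReal (h t) ∂lam := by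
          rw [lintegral_const_mul _ (by fun_prop)]
      _ ≤ ∫⁻ t, (ENNReal.ofReal (Λ (h t)) + ENNReal.ofReal d) ∂lam := by
          refine lintegral_mono fun t => ?_
          dsimp only
          rw [← ENNReal.ofReal_mul hsnn, ← ENNReal.ofReal_add (hnn _) hd0]
          refine ENNReal.ofReal_le_ofReal ?_
          have := hs (h t)
          rw [hd]; linarith
      _ = ∫⁻ t, ENNReal.ofReal (Λ (h t)) ∂lam + ENNReal.ofReal d * lam univ := by
          rw [lintegral_add_right _ measurable_const, lintegral_const]
      _ ≤ _ := by
          gcongr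
          exact mul_le_of_le_one_right' hlam
  have h2 : ENNReal.ofReal s * ENNReal.ofReal y0 = ENNReal.ofReal (Λ y0) + ENNReal.ofReal d := by
    rw [← ENNReal.ofReal_mul hsnn, ← ENNReal.ofReal_add (hnn _) hd0]
    congr 1; rw [hd]; ring
  rw [h2] at h1
  exact (ENNReal.add_le_add_iff_right ENNReal.ofReal_ne_top).1 h1

lemma aux_secL {r : ℝ → ℝ → Prop} (hr : MeasurableSet {q : ℝ × ℝ | r q.1 q.2}) (x : ℝ) :
    MeasurableSet {t | r t x} :=
  (measurable_id.prodMk measurable_const : Measurable fun t : ℝ => (t, x)) hr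

lemma aux_secR {r : ℝ → ℝ → Prop} (hr : MeasurableSet {q : ℝ × ℝ | r q.1 q.2}) (x : ℝ) :
    MeasurableSet {t | r x t} :=
  (measurable_const.prodMk measurable_id : Measurable fun t : ℝ => (x, t)) hr

lemma aux_measL (σ : Measure ℝ) [SFinite σ] {r : ℝ → ℝ → Prop}
    (hr : MeasurableSet {q : ℝ × ℝ | r q.1 q.2}) (k : ℝ → ℝ≥0∞) (hk : Measurable k) :
    Measurable (fun x => ∫⁻ t in {t | r t x}, k t ∂σ) := by
  have : (fun x => ∫⁻ t in {t | r t x}, k t ∂σ)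
      = fun x => ∫⁻ t, ({q : ℝ × ℝ | r q.1 q.2}.indicator (fun q => k q.1)) (t, x) ∂σ := by
    funext x
    rw [← lintegral_indicator (aux_secL hr x)]
    rfl
  rw [this]
  exact Measurable.lintegral_prod_left' ((hk.comp measurable_fst).indicator hr)

lemma aux_measR (σ : Measure ℝ) [SFinite σ] {r : ℝ → ℝ → Prop}
    (hr : MeasurableSet {q : ℝ × ℝ | r q.1 q.2}) (k : ℝ → ℝ≥0∞) (hk : Measurable k) :
    Measurable (fun x => ∫⁻ t in {t | r x t}, k t ∂σ) := by
  have : (fun x => ∫⁻ t in {t | r x t}, k t ∂σ)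
      = fun x => ∫⁻ t, ({q : ℝ × ℝ | r q.1 q.2}.indicator (fun q => k q.2)) (x, t) ∂σ := by
    funext x
    rw [← lintegral_indicator (aux_secR hr x)]
    rfl
  rw [this]
  exact Measurable.lintegral_prod_right' ((hk.comp measurable_snd).indicator hr)

lemma aux_holder (σ : Measure ℝ) [SFinite σ] {r : ℝ → ℝ → Prop}
    (hr : MeasurableSet {q : ℝ × ℝ | r q.1 q.2})
    (h1 : ∀ (κ : Measure ℝ) (c : ℝ≥0∞), κ {t | κ {s | r s t} < c} ≤ c)
    (p pc : ℝ) (hpq : p.HolderConjugate pc)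
    (w N G U : ℝ → ℝ≥0∞) (hwm : Measurable w) (hNm : Measurable N) (hGm : Measurable G)
    (hUm : Measurable U)
    (hw : ∀ᵐ t ∂σ, w t ≠ 0 ∧ w t ≠ ⊤) (hU : ∀ t, U t ≠ ⊤)
    (β : ℝ≥0∞) (hβ0 : β ≠ 0) (hβt : β ≠ ⊤)
    (hB : ∀ᵐ x ∂σ, (∫⁻ t in {t | r t x}, N t ^ pc * w t ^ (1 - pc) ∂σ) ^ (1 / pc) ≤ β * U x ^ 2) :
    ∀ᵐ x ∂σ, ∫⁻ t in {t | r t x}, G t * N t ∂σ ≤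
      (∫⁻ t in {t | r t x}, G t ^ p * w t * U t ^ p ∂σ) ^ (1 / p) * (2 * β * U x) := by
  have hp0 : 0 < p := hpq.pos
  have hq0 : 0 < pc := hpq.symm.pos
  have hq1 : 1 < pc := hpq.symm.lt
  set k : ℝ → ℝ≥0∞ := fun t => N t ^ pc * w t ^ (1 - pc) with hk
  have hkm : Measurable k := by fun_prop
  set V : ℝ → ℝ≥0∞ := fun x => ∫⁻ t in {t | r t x}, k t ∂σ with hVdef
  have hVm : Measurable V := aux_measL σ hr k hkm
  set m := σ.withDensity k with hm
  have hVm' : ∀ x, m {t | r t x} = V x := fun x => withDensity_apply _ (aux_secL hr x)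
  have hmV : ∀ c, m {t | V t < c} ≤ c := by
    intro c
    have := h1 m c
    simpa only [hVm'] using this
  -- V vanishes only where N vanishes
  have hnull : m {t | V t = 0} = 0 := by
    refine le_antisymm (ENNReal.le_of_forall_pos_le_add ?_) (zero_le)
    intro ε hε _
    rw [zero_add]
    refine (measure_mono ?_).trans (hmV ε)
    intro t ht
    have ht' : V t = 0 := ht
    change V t < ε
    rw [ht']; exact_mod_cast hε
  have hN0 : ∀ᵐ t ∂σ, V t = 0 → N t = 0 := by
    change m (V ⁻¹' {0}) = 0 at hnull
    rw [hm, withDensity_apply _ (hVm (measurableSet_singleton 0)),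
      lintegral_eq_zero_iff hkm] at hnull
    have h3 := (ae_restrict_iff' (hVm (measurableSet_singleton 0))).1 hnull
    filter_upwards [h3, hw] with t ht hwt hV0
    have h4 : k t = 0 := ht hV0
    simp only [hk, mul_eq_zero] at h4
    rcases h4 with h4 | h4
    · rw [ENNReal.rpow_eq_zero_iff] at h4
      rcases h4 with h4 | h4
      · exact h4.1
      · linarith [h4.2]
    · rw [ENNReal.rpow_eq_zero_iff] at h4
      rcases h4 with h4 | h4
      · exact absurd h4.1 hwt.1
      · exact absurd h4.1 hwt.2
  have hVU : ∀ᵐ x ∂σ, V x ≤ β ^ pc * U x ^ (2 * pc) := by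
    filter_upwards [hB] with x hx
    have := ENNReal.rpow_le_rpow hx hq0.le
    rw [← ENNReal.rpow_mul, one_div, inv_mul_cancel₀ hq0.ne', ENNReal.rpow_one,
      ENNReal.mul_rpow_of_nonneg _ _ hq0.le] at this
    refine this.trans (le_of_eq ?_)
    rw [ENNReal.rpow_mul]
    norm_cast
  -- the Hardy kernel
  have hker : ∀ᵐ x ∂σ, (∫⁻ t in {t | r t x}, (N t * w t ^ (-(1 / p)) * (U t)⁻¹) ^ pc ∂σ) ^ (1 / pc)
      ≤ 2 * β * U x := by
    filter_upwards [hVU] with x hx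
    have e1 : ∫⁻ t in {t | r t x}, (N t * w t ^ (-(1 / p)) * (U t)⁻¹) ^ pc ∂σ
        ≤ ∫⁻ t in {t | r t x}, k t * (β ^ (pc / 2) * V t ^ (-(1/2) : ℝ)) ∂σ := by
      refine lintegral_mono_ae (ae_restrict_of_ae ?_)
      filter_upwards [hVU] with t ht
      rw [ENNReal.mul_rpow_of_nonneg _ _ hq0.le, ENNReal.mul_rpow_of_nonneg _ _ hq0.le,
        ← ENNReal.rpow_mul]
      have : -(1 / p) * pc = 1 - pc := by
        have := hpq.inv_add_inv_eq_one
        field_simp at this ⊢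
        linarith
      rw [this]
      change k t * _ ≤ _
      gcongr
      -- U^{-pc} ≤ β^{pc/2} V^{-1/2}
      rw [ENNReal.inv_rpow, ENNReal.rpow_neg]
      have h5 := ENNReal.rpow_le_rpow ht (z := 1/2) (by norm_num)
      rw [ENNReal.mul_rpow_of_nonneg _ _ (by norm_num), ← ENNReal.rpow_mul, ← ENNReal.rpow_mul] at h5
      have e2 : pc * (1/2) = pc / 2 := by ring
      have e3 : 2 * pc * (1/2) = pc := by ring
      rw [e2, e3] at h5
      have hb0 : β ^ (pc / 2) ≠ 0 := by simp [hβ0, hβt]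
      have hbt : β ^ (pc / 2) ≠ ⊤ := ENNReal.rpow_ne_top_of_nonneg (by positivity) hβt
      rw [← div_eq_mul_inv, ENNReal.le_div_iff_mul_le]
      · rw [mul_comm, ← div_eq_mul_inv]
        by_cases hu : U t ^ pc = 0
        · rw [hu, mul_zero] at h5
          have : V t ^ (1/2 : ℝ) = 0 := le_antisymm h5 (zero_le)
          rw [this]; simp
        · exact ENNReal.div_le_of_le_mul h5
      · right; exact hb0
      · right; exact hbt
    have e2 : ∫⁻ t in {t | r t x}, k t * (β ^ (pc / 2) * V t ^ (-(1/2) : ℝ)) ∂σ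
        ≤ 2 * β ^ pc * U x ^ pc := by
      have e3 : ∫⁻ t in {t | r t x}, k t * (β ^ (pc / 2) * V t ^ (-(1/2) : ℝ)) ∂σ
          = β ^ (pc / 2) * ∫⁻ t in {t | r t x}, V t ^ (-(1/2) : ℝ) ∂m := by
        rw [hm, restrict_withDensity (aux_secL hr x),
          lintegral_withDensity_eq_lintegral_mul _ hkm (by fun_prop),
          ← lintegral_const_mul _ (by fun_prop)]
        refine lintegral_congr fun t => ?_
        simp only [Pi.mul_apply]; ring
      rw [e3]
      have e4 := aux_layer (m.restrict {t | r t x}) V hVm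
        (fun c => (Measure.restrict_apply_le _ _).trans (hmV c))
      rw [Measure.restrict_apply_univ, hVm'] at e4
      calc _ ≤ β ^ (pc / 2) * (2 * (β ^ pc * U x ^ (2 * pc)) ^ (1/2 : ℝ)) := by
            gcongr
            refine e4.trans ?_
            gcongr
        _ = _ := by
            rw [ENNReal.mul_rpow_of_nonneg _ _ (by norm_num), ← ENNReal.rpow_mul,
              ← ENNReal.rpow_mul]
            have e2 : pc * (1/2) = pc / 2 := by ring
            have e3 : 2 * pc * (1/2) = pc := by ring
            rw [e2, e3]
            have : β ^ pc = β ^ (pc / 2) * β ^ (pc / 2) := by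
              rw [← ENNReal.rpow_add _ _ hβ0 hβt]; congr 1; ring
            rw [this]; ring
    calc _ ≤ (2 * β ^ pc * U x ^ pc) ^ (1 / pc) := by
          gcongr
          exact e1.trans e2
      _ = 2 ^ (1 / pc) * β * U x := by
          rw [ENNReal.mul_rpow_of_nonneg _ _ (by positivity),
            ENNReal.mul_rpow_of_nonneg _ _ (by positivity), ← ENNReal.rpow_mul,
            ← ENNReal.rpow_mul, mul_one_div_cancel hq0.ne', ENNReal.rpow_one, ENNReal.rpow_one]
      _ ≤ 2 * β * U x := by
          gcongr
          nth_rewrite 2 [← ENNReal.rpow_one 2]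
          refine ENNReal.rpow_le_rpow_of_exponent_le (by norm_num) ?_
          rw [div_le_one hq0]; exact hq1.le
  filter_upwards [hker] with x hx
  have hh := ENNReal.lintegral_mul_le_Lp_mul_Lq (σ.restrict {t | r t x}) hpq
    (f := fun t => G t * w t ^ (1 / p) * U t) (g := fun t => N t * w t ^ (-(1 / p)) * (U t)⁻¹)
    (by fun_prop) (by fun_prop)
  refine le_trans ?_ (hh.trans ?_)
  · refine lintegral_mono_ae (ae_restrict_of_ae ?_)
    filter_upwards [hN0, hw, hVU] with t hN hwt hVt
    simp only [Pi.mul_apply]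
    by_cases hu : U t = 0
    · have : V t = 0 := by
        rw [hu, ENNReal.zero_rpow_of_pos (by positivity), mul_zero] at hVt
        exact le_antisymm hVt (zero_le)
      rw [hN this]; simp
    · have e1 : w t ^ (1 / p) * w t ^ (-(1 / p)) = 1 := by
        rw [← ENNReal.rpow_add _ _ hwt.1 hwt.2]; simp
      have e2 : U t * (U t)⁻¹ = 1 := ENNReal.mul_inv_cancel hu (hU t)
      calc G t * N t = G t * N t * (w t ^ (1 / p) * w t ^ (-(1 / p))) * (U t * (U t)⁻¹) := by
            rw [e1, e2]; simp
        _ ≤ _ := le_of_eq (by ring)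
  · gcongr with t
    refine le_of_eq ?_
    rw [ENNReal.mul_rpow_of_nonneg _ _ hp0.le, ENNReal.mul_rpow_of_nonneg _ _ hp0.le,
      ← ENNReal.rpow_mul, one_div_mul_cancel hp0.ne', ENNReal.rpow_one]

lemma aux_young_mono {Φ : ℝ → ℝ} (hΦ : IsYoung Φ) {s t : ℝ} (hs : 0 ≤ s) (hst : s ≤ t) :
    Φ s ≤ Φ t := by
  obtain ⟨hc, -, h0, hnn, -⟩ := hΦ
  rcases (hs.trans hst).eq_or_lt with h | h
  · have : s = t := le_antisymm hst (h ▸ hs)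
    rw [this]
  have ha0 : 0 ≤ s / t := by positivity
  have hb0 : 0 ≤ 1 - s / t := by rw [sub_nonneg, div_le_one h]; exact hst
  have h1 := hc.2 (mem_univ t) (mem_univ 0) ha0 hb0 (by ring)
  simp only [smul_eq_mul, mul_zero, add_zero, h0, div_mul_cancel₀ _ h.ne'] at h1
  have : s / t ≤ 1 := by rw [div_le_one h]; exact hst
  nlinarith [hnn t]

lemma aux_inv_meas {Φ Φinv : ℝ → ℝ} (hΦ : IsYoung Φ) (hinv : IsYoungInv Φ Φinv) :
    Measurable (fun t => Φinv (max t 0)) := by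
  refine Monotone.measurable ?_
  intro s t hst
  have hst' : max s 0 ≤ max t 0 := max_le_max_right _ hst
  have h1 : (0:ℝ) ≤ max s 0 := le_max_right _ _
  have h2 : (0:ℝ) ≤ max t 0 := le_max_right _ _
  by_contra hlt
  push Not at hlt
  have := aux_young_mono hΦ (hinv.1 _ h2) hlt.le
  rw [hinv.2.1 _ h1, hinv.2.1 _ h2] at this
  have e : max s 0 = max t 0 := le_antisymm hst' this
  simp only [e] at hlt
  exact lt_irrefl _ hlt

lemma aux_modular (σ : Measure ℝ) [SFinite σ] {r : ℝ → ℝ → Prop}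
    (hr : MeasurableSet {q : ℝ × ℝ | r q.1 q.2})
    (h1 : ∀ (κ : Measure ℝ) (c : ℝ≥0∞), κ {t | κ {s | r s t} < c} ≤ c)
    (h2 : ∀ (κ : Measure ℝ) (c : ℝ≥0∞), κ {t | κ {s | r t s} < c} ≤ c)
    (p pc : ℝ) (hpq : p.HolderConjugate pc)
    (Φ Φinv : ℝ → ℝ) (hΦ : IsYoung Φ) (hsub : Submult Φ) (hinv : IsYoungInv Φ Φinv)
    (hΛ : ConvexOn ℝ Set.univ (fun t => Φ (|t| ^ (1 / p))))
    (m w N G : ℝ → ℝ≥0∞) (hmm : Measurable m) (hwm : Measurable w) (hNm : Measurable N)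
    (hGm : Measurable G)
    (hw : ∀ᵐ t ∂σ, w t ≠ 0 ∧ w t ≠ ⊤)
    (β l : ℝ) (hβ0 : 0 < β) (hl0 : 0 < l)
    (hL : ∫⁻ t, G t ^ p * w t ∂σ ≤ ENNReal.ofReal l ^ p)
    (hB : ∀ᵐ x ∂σ, (∫⁻ t in {t | r t x}, N t ^ pc * w t ^ (1 - pc) ∂σ) ^ (1 / pc) ≤
      ENNReal.ofReal β *
        ENNReal.ofReal (Φinv ((∫⁻ s in {s | r x s}, m s ∂σ).toReal ^ (-(1/2) : ℝ))) ^ 2) :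
    ∫⁻ x, ENNReal.ofReal (Φ ((∫⁻ t in {t | r t x}, G t * N t ∂σ).toReal /
      (2 * β * l / Φinv (1/2)))) * m x ∂σ ≤ 1 := by
  have hp0 : 0 < p := hpq.pos
  obtain ⟨hcv, hev, hΦ0, hnn, htd⟩ := id hΦ
  set φ := Φinv (1/2) with hφ
  have hφ1 : Φ φ = 1/2 := hinv.2.1 _ (by norm_num)
  have hφ0 : 0 < φ := by
    refine lt_of_le_of_ne (hinv.1 _ (by norm_num)) ?_
    intro h
    rw [← h, hΦ0] at hφ1
    norm_num at hφ1
  set C := 2 * β * l / φ with hC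
  have hC0 : 0 < C := by positivity
  set M : ℝ → ℝ≥0∞ := fun x => ∫⁻ s in {s | r x s}, m s ∂σ with hMdef
  have hMm : Measurable M := aux_measR σ hr m hmm
  set u : ℝ → ℝ := fun x => Φinv ((M x).toReal ^ (-(1/2) : ℝ)) with hu
  have hunn : ∀ x, 0 ≤ u x := fun x => hinv.1 _ (by positivity)
  have hum : Measurable u := by
    have e : u = (fun t => Φinv (max t 0)) ∘ fun x => (M x).toReal ^ (-(1/2) : ℝ) := by
      funext x
      simp only [hu, Function.comp]
      rw [max_eq_left (by positivity)]
    rw [e]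
    exact (aux_inv_meas hΦ hinv).comp (by fun_prop)
  have hΦu : ∀ x, ENNReal.ofReal (Φ (u x)) ≤ M x ^ (-(1/2) : ℝ) := by
    intro x
    rw [hinv.2.1 _ (by positivity)]
    by_cases h0 : M x = 0
    · simp [h0]
    by_cases ht : M x = ⊤
    · simp only [ht, ENNReal.toReal_top]
      rw [Real.zero_rpow (by norm_num)]; simp
    rw [← ENNReal.ofReal_rpow_of_pos (ENNReal.toReal_pos h0 ht), ENNReal.ofReal_toReal ht]
  have hA := aux_holder σ hr h1 p pc hpq w N G (fun x => ENNReal.ofReal (u x)) hwm hNm hGm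
    (by fun_prop) hw (fun t => ENNReal.ofReal_ne_top) (ENNReal.ofReal β) (by simpa using hβ0)
    ENNReal.ofReal_ne_top hB
  set A : ℝ → ℝ≥0∞ := fun x => ∫⁻ t in {t | r t x}, G t * N t ∂σ with hAdef
  have hl0' : ENNReal.ofReal l ^ p ≠ 0 := by
    rw [ENNReal.ofReal_rpow_of_pos hl0]; simp; positivity
  have hlt' : ENNReal.ofReal l ^ p ≠ ⊤ := ENNReal.rpow_ne_top_of_nonneg hp0.le ENNReal.ofReal_ne_top
  set d : ℝ → ℝ≥0∞ := fun t => G t ^ p * w t * (ENNReal.ofReal l ^ p)⁻¹ with hd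
  have hdm : Measurable d := by fun_prop
  set lam := σ.withDensity d with hlam
  have hlam1 : lam univ ≤ 1 := by
    rw [hlam, withDensity_apply _ MeasurableSet.univ, Measure.restrict_univ,
      lintegral_mul_const _ (by fun_prop)]
    rw [← div_eq_mul_inv]
    exact ENNReal.div_le_of_le_mul (by simpa using hL)
  have hpt : ∀ᵐ x ∂σ, ENNReal.ofReal (Φ ((A x).toReal / C)) ≤
      ∫⁻ t in {t | r t x}, 2⁻¹ * M x ^ (-(1/2) : ℝ) * M t ^ (-(1/2) : ℝ) ∂lam := by
    filter_upwards [hA] with x hx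
    set h : ℝ → ℝ := {t | r t x}.indicator (fun t => (φ * u x * u t) ^ p) with hh
    have hhm : Measurable h := Measurable.indicator (by fun_prop) (aux_secL hr x)
    have hy : ENNReal.ofReal (((A x).toReal / C) ^ p) ≤ ∫⁻ t, ENNReal.ofReal (h t) ∂lam := by
      have e1 : ∫⁻ t, ENNReal.ofReal (h t) ∂lam
          = ∫⁻ t in {t | r t x}, ENNReal.ofReal ((φ * u x * u t) ^ p) ∂lam := by
        rw [← lintegral_indicator (aux_secL hr x)]
        refine lintegral_congr fun t => ?_
        simp only [hh, indicator]
        split_ifs <;> simp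
      have e2 : ∫⁻ t in {t | r t x}, ENNReal.ofReal ((φ * u x * u t) ^ p) ∂lam
          = (ENNReal.ofReal (φ * u x / l)) ^ p *
            ∫⁻ t in {t | r t x}, G t ^ p * w t * ENNReal.ofReal (u t) ^ p ∂σ := by
        rw [hlam, restrict_withDensity (aux_secL hr x),
          lintegral_withDensity_eq_lintegral_mul _ hdm (by fun_prop),
          ← lintegral_const_mul _ (by fun_prop)]
        refine lintegral_congr fun t => ?_
        simp only [Pi.mul_apply, hd]
        rw [← ENNReal.ofReal_rpow_of_nonneg
            (mul_nonneg (mul_nonneg hφ0.le (hunn x)) (hunn t)) hp0.le,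
          ENNReal.ofReal_mul (mul_nonneg hφ0.le (hunn x)),
          ENNReal.ofReal_div_of_pos hl0, ENNReal.div_rpow_of_nonneg _ _ hp0.le,
          ENNReal.mul_rpow_of_nonneg _ _ hp0.le, div_eq_mul_inv]
        ring
      rw [e1, e2, ← ENNReal.ofReal_rpow_of_nonneg (by positivity) hp0.le]
      set I := ∫⁻ t in {t | r t x}, G t ^ p * w t * ENNReal.ofReal (u t) ^ p ∂σ with hI
      have e3 : ENNReal.ofReal ((A x).toReal / C) ≤ I ^ (1 / p) * ENNReal.ofReal (φ * u x / l) := by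
        rw [ENNReal.ofReal_div_of_pos hC0]
        refine ENNReal.div_le_of_le_mul (ENNReal.ofReal_toReal_le.trans (hx.trans (le_of_eq ?_)))
        rw [mul_assoc (I ^ (1 / p)) (ENNReal.ofReal (φ * u x / l)),
          ← ENNReal.ofReal_mul (by have := hunn x; positivity)]
        have : φ * u x / l * C = 2 * β * u x := by
          rw [hC]; field_simp
        rw [this, ENNReal.ofReal_mul (by positivity), ENNReal.ofReal_mul (by norm_num)]
        simp
      refine (ENNReal.rpow_le_rpow e3 hp0.le).trans (le_of_eq ?_)
      rw [ENNReal.mul_rpow_of_nonneg _ _ hp0.le, ← ENNReal.rpow_mul, one_div_mul_cancel hp0.ne',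
        ENNReal.rpow_one, mul_comm]
    have hj := aux_jensen lam hlam1 _ hΛ (by
        simp only [abs_zero]; rw [Real.zero_rpow (by positivity), hΦ0])
      (fun y => hnn _) h hhm _ (by positivity) hy
    have hroot : ∀ z : ℝ, 0 ≤ z → |z ^ p| ^ (1 / p) = z := by
      intro z hz
      rw [abs_of_nonneg (by positivity), ← Real.rpow_mul hz, mul_one_div_cancel hp0.ne',
        Real.rpow_one]
    simp only [hroot _ (div_nonneg ENNReal.toReal_nonneg hC0.le)] at hj
    refine hj.trans ?_
    rw [← lintegral_indicator (aux_secL hr x)]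
    refine lintegral_mono fun t => ?_
    simp only [hh, indicator]
    split_ifs with hrt
    · rw [hroot _ (mul_nonneg (mul_nonneg hφ0.le (hunn x)) (hunn t))]
      have e5 : Φ (φ * u x * u t) ≤ 2⁻¹ * Φ (u x) * Φ (u t) := by
        refine (hsub _ _ (mul_nonneg hφ0.le (hunn x)) (hunn t)).trans ?_
        refine mul_le_mul_of_nonneg_right ?_ (hnn _)
        refine (hsub _ _ hφ0.le (hunn x)).trans ?_
        rw [hφ1]; norm_num
      refine (ENNReal.ofReal_le_ofReal e5).trans ?_
      rw [ENNReal.ofReal_mul (mul_nonneg (by norm_num) (hnn _)), ENNReal.ofReal_mul (by norm_num)]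
      gcongr
      · rw [ENNReal.ofReal_inv_of_pos (by norm_num)]; simp
      · exact hΦu x
      · exact hΦu t
    · rw [abs_zero, Real.zero_rpow (by positivity), hΦ0]; simp
  set κ := σ.withDensity m with hκ
  have hκM : ∀ x, κ {s | r x s} = M x := fun x => withDensity_apply _ (aux_secR hr x)
  have hκ2 : ∀ c, κ {t | M t < c} ≤ c := by
    intro c
    have := h2 κ c
    simpa only [hκM] using this
  set F : ℝ → ℝ → ℝ≥0∞ := fun x t => {q : ℝ × ℝ | r q.1 q.2}.indicator
    (fun q => 2⁻¹ * M q.2 ^ (-(1/2) : ℝ) * M q.1 ^ (-(1/2) : ℝ)) (t, x) with hF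
  have hFm : Measurable (Function.uncurry F) := by
    have : Measurable ({q : ℝ × ℝ | r q.1 q.2}.indicator
      (fun q => 2⁻¹ * M q.2 ^ (-(1/2) : ℝ) * M q.1 ^ (-(1/2) : ℝ))) :=
      Measurable.indicator (by fun_prop) hr
    exact this.comp measurable_swap
  calc ∫⁻ x, ENNReal.ofReal (Φ ((A x).toReal / C)) * m x ∂σ
      ≤ ∫⁻ x, (m * fun x => ∫⁻ t, F x t ∂lam) x ∂σ := by
        refine lintegral_mono_ae ?_
        filter_upwards [hpt] with x hx
        rw [Pi.mul_apply, mul_comm]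
        gcongr
        rw [← lintegral_indicator (aux_secL hr x)] at hx
        exact hx
    _ = ∫⁻ x, ∫⁻ t, F x t ∂lam ∂κ := by
        rw [hκ, lintegral_withDensity_eq_lintegral_mul _ hmm]
        exact hFm.lintegral_prod_right'
    _ = ∫⁻ t, ∫⁻ x, F x t ∂κ ∂lam := lintegral_lintegral_swap hFm.aemeasurable
    _ ≤ ∫⁻ t, 1 ∂lam := by
        refine lintegral_mono fun t => ?_
        have e1 : ∫⁻ x, F x t ∂κ = ∫⁻ x in {x | r t x},
            2⁻¹ * M x ^ (-(1/2) : ℝ) * M t ^ (-(1/2) : ℝ) ∂κ := by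
          rw [← lintegral_indicator (aux_secR hr t)]
          rfl
        have e2 := aux_layer (κ.restrict {x | r t x}) M hMm
          (fun c => (Measure.restrict_apply_le _ _).trans (hκ2 c))
        rw [Measure.restrict_apply_univ, hκM] at e2
        rw [e1, lintegral_mul_const _ (by fun_prop), lintegral_const_mul _ (by fun_prop)]
        calc _ ≤ 2⁻¹ * (2 * M t ^ (1/2 : ℝ)) * M t ^ (-(1/2) : ℝ) := by gcongr
          _ = M t ^ (1/2 : ℝ) / M t ^ (1/2 : ℝ) := by
            rw [← mul_assoc, ENNReal.inv_mul_cancel (by norm_num) (by norm_num), one_mul,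
              ENNReal.rpow_neg, ← div_eq_mul_inv (M t ^ (1/2 : ℝ))]
          _ ≤ 1 := ENNReal.div_self_le_one
    _ ≤ 1 := by simpa using hlam1

lemma aux_inv_mul {X Y B : ℝ≥0∞} (hX : X ≠ ⊤) (hB : B ≠ ⊤) (h : X⁻¹ * Y ≤ B) : Y ≤ B * X := by
  by_cases h0 : X = 0
  · rw [h0, ENNReal.inv_zero] at h
    by_cases hY : Y = 0
    · simp [hY]
    · rw [ENNReal.top_mul hY] at h
      exact absurd (top_le_iff.1 h) hB
  · calc Y = (X⁻¹ * Y) * X := by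
          rw [mul_comm X⁻¹, mul_assoc, ENNReal.inv_mul_cancel h0 hX, mul_one]
      _ ≤ B * X := by gcongr

lemma aux_setL {a b x : ℝ} (hx : x ∈ Ioo a b) (k : ℝ → ℝ≥0∞) :
    ∫⁻ t in {t | t ≤ x}, k t ∂(volume.restrict (Ioo a b)) = ∫⁻ t in Icc a x, k t := by
  have hm : MeasurableSet {t : ℝ | t ≤ x} := measurableSet_Iic
  rw [Measure.restrict_restrict hm]
  have : {t : ℝ | t ≤ x} ∩ Ioo a b = Ioc a x := by
    ext t
    simp only [mem_inter_iff, mem_ofPred_eq, mem_Ioo, mem_Ioc]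
    have := hx.2
    constructor
    · rintro ⟨h1, h2, h3⟩; exact ⟨h2, h1⟩
    · rintro ⟨h1, h2⟩; exact ⟨h2, h1, by linarith⟩
  rw [this, Measure.restrict_congr_set Ioc_ae_eq_Icc]

lemma aux_setR {a b x : ℝ} (hx : x ∈ Ioo a b) (k : ℝ → ℝ≥0∞) :
    ∫⁻ t in {t | x ≤ t}, k t ∂(volume.restrict (Ioo a b)) = ∫⁻ t in Icc x b, k t := by
  have hm : MeasurableSet {t : ℝ | x ≤ t} := measurableSet_Ici
  rw [Measure.restrict_restrict hm]
  have : {t : ℝ | x ≤ t} ∩ Ioo a b = Ico x b := by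
    ext t
    simp only [mem_inter_iff, mem_ofPred_eq, mem_Ioo, mem_Ico]
    have := hx.1
    constructor
    · rintro ⟨h1, h2, h3⟩; exact ⟨h1, h3⟩
    · rintro ⟨h1, h2⟩; exact ⟨h1, by linarith, h2⟩
  rw [this, Measure.restrict_congr_set Ico_ae_eq_Icc]

lemma aux_ftc {f : ℝ → ℝ} {a b : ℝ} {K : ℝ≥0} (hf : LipschitzOnWith K f (Icc a b)) {x y : ℝ}
    (hx : x ∈ Icc a b) (hy : y ∈ Icc a b) (hyx : y ≤ x) :
    ‖f x - f y‖ₑ ≤ ∫⁻ t in Icc y x, ‖deriv f t‖ₑ ∂(volume.restrict (Ioo a b)) := by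
  have hs : uIcc y x ⊆ Icc a b := by
    rw [uIcc_of_le hyx]; exact Icc_subset_Icc hy.1 hx.2
  have h1 := (hf.mono hs).absolutelyContinuousOnInterval.integral_deriv_eq_sub
  rw [← h1, intervalIntegral.integral_of_le hyx]
  refine (enorm_integral_le_lintegral_enorm _).trans ?_
  rw [Measure.restrict_congr_set Ioo_ae_eq_Ioc.symm, Measure.restrict_restrict measurableSet_Icc]
  refine lintegral_mono_set ?_
  intro t ht
  exact ⟨⟨ht.1.le, ht.2.le⟩, lt_of_le_of_lt hy.1 ht.1, lt_of_lt_of_le ht.2 hx.2⟩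

lemma aux_point {f : ℝ → ℝ} {a b : ℝ} {K : ℝ≥0} (hf : LipschitzOnWith K f (Icc a b))
    (ν : Measure ℝ) [IsFiniteMeasure ν] (hν : 0 < ν (Icc a b)) {x : ℝ} (hx : x ∈ Ioo a b) :
    ‖f x - (ν (Icc a b)).toReal⁻¹ * ∫ y in Icc a b, f y ∂ν‖ₑ * ν (Icc a b) ≤
      ∫⁻ t in {t | t ≤ x}, ‖deriv f t‖ₑ * ν (Icc a t) ∂(volume.restrict (Ioo a b)) +
      ∫⁻ t in {t | x ≤ t}, ‖deriv f t‖ₑ * ν (Icc t b) ∂(volume.restrict (Ioo a b)) := by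
  set σ := (volume : Measure ℝ).restrict (Ioo a b) with hσ
  have hx' : x ∈ Icc a b := ⟨hx.1.le, hx.2.le⟩
  have hfi : IntegrableOn f (Icc a b) ν := hf.continuousOn.integrableOn_Icc
  set n := (ν (Icc a b)).toReal with hn
  have hn0 : 0 < n := ENNReal.toReal_pos hν.ne' (measure_ne_top _ _)
  have e0 : ν (Icc a b) = ‖n‖ₑ := by
    rw [Real.enorm_eq_ofReal hn0.le, hn, ENNReal.ofReal_toReal (measure_ne_top _ _)]
  have e1 : ‖f x - n⁻¹ * ∫ y in Icc a b, f y ∂ν‖ₑ * ν (Icc a b)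
      = ‖∫ y in Icc a b, (f x - f y) ∂ν‖ₑ := by
    rw [e0, ← enorm_mul, integral_sub (integrable_const _) hfi]
    congr 1
    rw [setIntegral_const, smul_eq_mul, Measure.real, ← hn]
    field_simp
  rw [e1]
  refine (enorm_integral_le_lintegral_enorm _).trans ?_
  have hGm : Measurable (fun t => ‖deriv f t‖ₑ) := (measurable_deriv f).enorm
  set H1 : ℝ → ℝ → ℝ≥0∞ := fun y t => {q : ℝ × ℝ | q.1 ≤ q.2}.indicator
    (fun q => ‖deriv f q.2‖ₑ) (y, t) with hH1
  set H2 : ℝ → ℝ → ℝ≥0∞ := fun y t => {q : ℝ × ℝ | q.2 ≤ q.1}.indicator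
    (fun q => ‖deriv f q.2‖ₑ) (y, t) with hH2
  have hm1 : Measurable (Function.uncurry H1) :=
    (hGm.comp measurable_snd).indicator (measurableSet_le measurable_fst measurable_snd)
  have hm2 : Measurable (Function.uncurry H2) :=
    (hGm.comp measurable_snd).indicator (measurableSet_le measurable_snd measurable_fst)
  have mL : MeasurableSet {t : ℝ | t ≤ x} := measurableSet_Iic
  have mR : MeasurableSet {t : ℝ | x ≤ t} := measurableSet_Ici
  calc ∫⁻ y in Icc a b, ‖f x - f y‖ₑ ∂ν
      ≤ ∫⁻ y in Icc a b, (∫⁻ t in {t | t ≤ x}, H1 y t ∂σ + ∫⁻ t in {t | x ≤ t}, H2 y t ∂σ) ∂ν := by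
        refine setLIntegral_mono' measurableSet_Icc fun y hy => ?_
        rcases le_total y x with h | h
        · refine le_trans ?_ le_self_add
          refine (aux_ftc hf hx' hy h).trans ?_
          rw [← lintegral_indicator measurableSet_Icc, ← lintegral_indicator mL]
          refine lintegral_mono fun t => ?_
          simp only [hH1, indicator, mem_Icc, mem_ofPred_eq]
          split_ifs <;> first | exact le_rfl | exact zero_le | (exfalso; tauto)
        · refine le_trans ?_ le_add_self
          rw [← enorm_neg, neg_sub]
          refine (aux_ftc hf hy hx' h).trans ?_
          rw [← lintegral_indicator measurableSet_Icc, ← lintegral_indicator mR]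
          refine lintegral_mono fun t => ?_
          simp only [hH2, indicator, mem_Icc, mem_ofPred_eq]
          split_ifs <;> first | exact le_rfl | exact zero_le | (exfalso; tauto)
    _ = ∫⁻ y in Icc a b, ∫⁻ t in {t | t ≤ x}, H1 y t ∂σ ∂ν +
        ∫⁻ y in Icc a b, ∫⁻ t in {t | x ≤ t}, H2 y t ∂σ ∂ν := by
        rw [lintegral_add_left]
        exact hm1.lintegral_prod_right'
    _ = ∫⁻ t in {t | t ≤ x}, ∫⁻ y in Icc a b, H1 y t ∂ν ∂σ +
        ∫⁻ t in {t | x ≤ t}, ∫⁻ y in Icc a b, H2 y t ∂ν ∂σ := by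
        rw [lintegral_lintegral_swap hm1.aemeasurable, lintegral_lintegral_swap hm2.aemeasurable]
    _ ≤ _ := by
        gcongr with t t
        · have : (fun y => H1 y t) = (Iic t).indicator (fun _ => ‖deriv f t‖ₑ) := by
            funext y; simp [hH1, indicator]
          rw [this, lintegral_indicator measurableSet_Iic, setLIntegral_const,
            Measure.restrict_apply measurableSet_Iic]
          gcongr
          intro y hy; exact ⟨hy.2.1, hy.1⟩
        · have : (fun y => H2 y t) = (Ici t).indicator (fun _ => ‖deriv f t‖ₑ) := by
            funext y; simp [hH2, indicator]
          rw [this, lintegral_indicator measurableSet_Ici, setLIntegral_const,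
            Measure.restrict_apply measurableSet_Ici]
          gcongr
          intro y hy; exact ⟨hy.1, hy.2.2⟩

lemma aux_combine {a b : ℝ} {p pc : ℝ} (hpq : p.HolderConjugate pc)
    {Φ Φinv μ w : ℝ → ℝ}
    (hΦ : IsYoung Φ) (hsub : Submult Φ) (hinv : IsYoungInv Φ Φinv)
    (hΛ : ConvexOn ℝ Set.univ (fun t => Φ (|t| ^ (1 / p))))
    (hμ : IsWeight μ a b) (hw : IsWeight w a b)
    (ν : Measure ℝ) [IsFiniteMeasure ν] (hν : 0 < ν (Set.Icc a b))
    (β₁ β₂ l : ℝ) (hβ₁ : 0 < β₁) (hβ₂ : 0 < β₂) (hl : 0 < l)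
    (hB1 : ∀ x ∈ Ioo a b, ((ENNReal.ofReal (Φinv ((wInt μ x b).toReal ^ (-(1/2) : ℝ)))) ^ 2)⁻¹ *
            (∫⁻ t in Set.Icc a x,
              ENNReal.ofReal ((ν (Set.Icc a t)).toReal ^ pc * w t ^ (1 - pc))) ^ (1 / pc)
              ≤ ENNReal.ofReal β₁)
    (hB2 : ∀ x ∈ Ioo a b, ((ENNReal.ofReal (Φinv ((wInt μ a x).toReal ^ (-(1/2) : ℝ)))) ^ 2)⁻¹ *
            (∫⁻ t in Set.Icc x b,
              ENNReal.ofReal ((ν (Set.Icc t b)).toReal ^ pc * w t ^ (1 - pc))) ^ (1 / pc)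
              ≤ ENNReal.ofReal β₂)
    {f : ℝ → ℝ} {K : ℝ≥0} (hf : LipschitzOnWith K f (Icc a b))
    (hL : ∫⁻ t, ‖deriv f t‖ₑ ^ p * ENNReal.ofReal (w t) ∂(volume.restrict (Ioo a b)) ≤
      ENNReal.ofReal l ^ p) :
    luxNorm Φ μ a b
        (fun x => f x - (ν (Set.Icc a b)).toReal⁻¹ * ∫ y in Set.Icc a b, f y ∂ν)
        ≤ ENNReal.ofReal (2 * (Φinv (1/2))⁻¹ * ((ν (Icc a b)).toReal⁻¹ * (β₁ + β₂)) * l) := by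
  obtain ⟨hcv, hev, hΦ0, hnn, htd⟩ := id hΦ
  set φ := Φinv (1/2) with hφ
  have hφ1 : Φ φ = 1/2 := hinv.2.1 _ (by norm_num)
  have hφ0 : 0 < φ := by
    refine lt_of_le_of_ne (hinv.1 _ (by norm_num)) ?_
    intro h
    rw [← h, hΦ0] at hφ1
    norm_num at hφ1
  set n := (ν (Icc a b)).toReal with hn
  have hn0 : 0 < n := ENNReal.toReal_pos hν.ne' (measure_ne_top _ _)
  have hnν : ν (Icc a b) = ENNReal.ofReal n := (ENNReal.ofReal_toReal (measure_ne_top _ _)).symm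
  set c := 2 * φ⁻¹ * (n⁻¹ * (β₁ + β₂)) * l with hc
  have hc0 : 0 < c := by positivity
  refine sInf_le ⟨c, hc0, rfl, ?_⟩
  set F : ℝ → ℝ := fun x => f x - n⁻¹ * ∫ y in Set.Icc a b, f y ∂ν with hF
  set σ := (volume : Measure ℝ).restrict (Ioo a b) with hσ
  rw [Measure.restrict_congr_set Ioo_ae_eq_Icc.symm, ← hσ]
  set m : ℝ → ℝ≥0∞ := fun x => ENNReal.ofReal (μ x) with hm
  set W : ℝ → ℝ≥0∞ := fun x => ENNReal.ofReal (w x) with hW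
  set G : ℝ → ℝ≥0∞ := fun t => ‖deriv f t‖ₑ with hG
  set N1 : ℝ → ℝ≥0∞ := fun t => ν (Icc a t) with hN1
  set N2 : ℝ → ℝ≥0∞ := fun t => ν (Icc t b) with hN2
  have hmm : Measurable m := hμ.1.ennreal_ofReal
  have hWm : Measurable W := hw.1.ennreal_ofReal
  have hGm : Measurable G := (measurable_deriv f).enorm
  have hN1m : Measurable N1 :=
    Monotone.measurable fun s t h => measure_mono (Icc_subset_Icc_right h)
  have hN2m : Measurable N2 :=
    Antitone.measurable fun s t h => measure_mono (Icc_subset_Icc_left h)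
  have hmem : ∀ᵐ x ∂σ, x ∈ Ioo a b := ae_restrict_mem measurableSet_Ioo
  have hwpos : ∀ᵐ x ∂σ, 0 < w x := by
    have := hw.2.2
    rwa [Measure.restrict_congr_set Ioo_ae_eq_Icc.symm] at this
  have hWae : ∀ᵐ t ∂σ, W t ≠ 0 ∧ W t ≠ ⊤ := by
    filter_upwards [hwpos] with t ht
    exact ⟨by simpa [hW] using ht, ENNReal.ofReal_ne_top⟩
  have hq0 : 0 < pc := hpq.symm.pos
  have hkk : ∀ N : ℝ → ℝ≥0∞, (∀ t, N t ≠ ⊤) → ∀ᵐ t ∂σ,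
      ENNReal.ofReal ((N t).toReal ^ pc * w t ^ (1 - pc)) = N t ^ pc * W t ^ (1 - pc) := by
    intro N hN
    filter_upwards [hwpos] with t ht
    rw [ENNReal.ofReal_mul (by positivity), ← ENNReal.ofReal_rpow_of_nonneg (by positivity) hq0.le,
      ENNReal.ofReal_toReal (hN t), ← ENNReal.ofReal_rpow_of_pos ht]
  have r1m : MeasurableSet {q : ℝ × ℝ | q.1 ≤ q.2} :=
    measurableSet_le measurable_fst measurable_snd
  have r2m : MeasurableSet {q : ℝ × ℝ | q.2 ≤ q.1} :=
    measurableSet_le measurable_snd measurable_fst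
  have M1 := aux_modular σ (r := fun s t => s ≤ t) r1m aux_Iic aux_Ici p pc hpq Φ Φinv hΦ hsub hinv
    hΛ m W N1 G hmm hWm hN1m hGm hWae β₁ l hβ₁ hl hL (by
      filter_upwards [hmem] with x hx
      have h := hB1 x hx
      rw [wInt, ← aux_setR hx, ← aux_setL hx, ← hσ,
        lintegral_congr_ae (ae_restrict_of_ae (hkk N1 fun t => measure_ne_top _ _))] at h
      exact aux_inv_mul (ENNReal.pow_ne_top ENNReal.ofReal_ne_top) ENNReal.ofReal_ne_top h)
  have M2 := aux_modular σ (r := fun s t => t ≤ s) r2m aux_Ici aux_Iic p pc hpq Φ Φinv hΦ hsub hinv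
    hΛ m W N2 G hmm hWm hN2m hGm hWae β₂ l hβ₂ hl hL (by
      filter_upwards [hmem] with x hx
      have h := hB2 x hx
      rw [wInt, ← aux_setR hx, ← aux_setL hx, ← hσ,
        lintegral_congr_ae (ae_restrict_of_ae (hkk N2 fun t => measure_ne_top _ _))] at h
      exact aux_inv_mul (ENNReal.pow_ne_top ENNReal.ofReal_ne_top) ENNReal.ofReal_ne_top h)
  simp only [← hφ] at M1 M2
  set A1 : ℝ → ℝ≥0∞ := fun x => ∫⁻ t in {t | t ≤ x}, G t * N1 t ∂σ with hA1
  set A2 : ℝ → ℝ≥0∞ := fun x => ∫⁻ t in {t | x ≤ t}, G t * N2 t ∂σ with hA2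
  have hA1m : Measurable A1 := aux_measL σ (r := fun s t => s ≤ t) r1m _ (by fun_prop)
  have hGb : ∀ᵐ t ∂σ, G t ≤ K := by
    filter_upwards [hmem] with t ht
    have := norm_deriv_le_of_lipschitzOn (Icc_mem_nhds ht.1 ht.2) hf
    change ‖deriv f t‖ₑ ≤ (K : ℝ≥0∞)
    rw [← ENNReal.ofReal_coe_nnreal, ← ofReal_norm]
    exact ENNReal.ofReal_le_ofReal this
  have hfin : ∀ (N : ℝ → ℝ≥0∞) (s : Set ℝ), (∀ t, N t ≤ ν univ) →
      ∫⁻ t in s, G t * N t ∂σ ≠ ⊤ := by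
    intro N s hN
    refine ne_top_of_le_ne_top ?_ (setLIntegral_le_lintegral s _)
    have : ∫⁻ t, G t * N t ∂σ ≤ ∫⁻ t, K * ν univ ∂σ := by
      refine lintegral_mono_ae ?_
      filter_upwards [hGb] with t ht
      exact mul_le_mul' ht (hN t)
    refine ne_top_of_le_ne_top ?_ this
    rw [lintegral_const, hσ, Measure.restrict_apply_univ, Real.volume_Ioo]
    exact ENNReal.mul_ne_top (ENNReal.mul_ne_top ENNReal.coe_ne_top (measure_ne_top _ _))
      ENNReal.ofReal_ne_top
  have hA1f : ∀ x, A1 x ≠ ⊤ := fun x => hfin _ _ fun t => measure_mono (subset_univ _)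
  have hA2f : ∀ x, A2 x ≠ ⊤ := fun x => hfin _ _ fun t => measure_mono (subset_univ _)
  have hΦc : Continuous Φ := by
    rw [← continuousOn_univ]
    exact hcv.continuousOn isOpen_univ
  set C1 := 2 * β₁ * l / φ with hC1
  set C2 := 2 * β₂ * l / φ with hC2
  have hC1p : 0 < C1 := by positivity
  have hC2p : 0 < C2 := by positivity
  set θ1 := β₁ / (β₁ + β₂) with hθ1
  set θ2 := β₂ / (β₁ + β₂) with hθ2
  have hθ1p : 0 ≤ θ1 := by positivity
  have hθ2p : 0 ≤ θ2 := by positivity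
  have hθ : θ1 + θ2 = 1 := by rw [hθ1, hθ2]; field_simp
  have hpt : ∀ᵐ x ∂σ, ENNReal.ofReal (Φ (F x / c) * μ x) ≤
      ENNReal.ofReal θ1 * (ENNReal.ofReal (Φ ((A1 x).toReal / C1)) * m x) +
      ENNReal.ofReal θ2 * (ENNReal.ofReal (Φ ((A2 x).toReal / C2)) * m x) := by
    filter_upwards [hmem] with x hx
    have h1 : ‖F x‖ₑ * ν (Icc a b) ≤ A1 x + A2 x := aux_point hf ν hν hx
    have h2 : |F x| * n ≤ (A1 x).toReal + (A2 x).toReal := by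
      rw [← ENNReal.toReal_add (hA1f x) (hA2f x)]
      have := ENNReal.toReal_mono (ENNReal.add_ne_top.2 ⟨hA1f x, hA2f x⟩) h1
      rwa [ENNReal.toReal_mul, toReal_enorm, Real.norm_eq_abs, ← hn] at this
    have h3 : |F x / c| ≤ θ1 * ((A1 x).toReal / C1) + θ2 * ((A2 x).toReal / C2) := by
      have e : θ1 * ((A1 x).toReal / C1) + θ2 * ((A2 x).toReal / C2)
          = ((A1 x).toReal + (A2 x).toReal) / n / c := by
        rw [hθ1, hθ2, hC1, hC2, hc]; field_simp
      rw [e, abs_div, abs_of_pos hc0]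
      gcongr
      rw [le_div_iff₀ hn0]; exact h2
    have h4 : Φ (F x / c) = Φ |F x / c| := by
      rcases abs_choice (F x / c) with h | h <;> rw [h]
      rw [hev]
    have h5 : Φ (F x / c) ≤ θ1 * Φ ((A1 x).toReal / C1) + θ2 * Φ ((A2 x).toReal / C2) := by
      rw [h4]
      refine (aux_young_mono hΦ (abs_nonneg _) h3).trans ?_
      have := hcv.2 (mem_univ ((A1 x).toReal / C1)) (mem_univ ((A2 x).toReal / C2)) hθ1p hθ2p hθ
      simpa only [smul_eq_mul] using this
    rw [ENNReal.ofReal_mul (hnn _), ← mul_assoc, ← mul_assoc, ← add_mul]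
    gcongr
    refine (ENNReal.ofReal_le_ofReal h5).trans (le_of_eq ?_)
    rw [ENNReal.ofReal_add (mul_nonneg hθ1p (hnn _)) (mul_nonneg hθ2p (hnn _)),
      ENNReal.ofReal_mul hθ1p, ENNReal.ofReal_mul hθ2p]
  refine (lintegral_mono_ae hpt).trans ?_
  have mm1 : Measurable fun x => ENNReal.ofReal (Φ ((A1 x).toReal / C1)) * m x :=
    ((hΦc.measurable.comp (hA1m.ennreal_toReal.div_const C1)).ennreal_ofReal).mul hmm
  rw [lintegral_add_left (mm1.const_mul _), lintegral_const_mul' _ _ ENNReal.ofReal_ne_top,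
    lintegral_const_mul' _ _ ENNReal.ofReal_ne_top]
  calc _ ≤ ENNReal.ofReal θ1 * 1 + ENNReal.ofReal θ2 * 1 := by gcongr
    _ = 1 := by
      rw [mul_one, mul_one, ← ENNReal.ofReal_add hθ1p hθ2p, hθ, ENNReal.ofReal_one]

/-- Sufficiency of `K_{p,Φ}(μ,ν,w) < ∞` for the `(Φ,p)` Orlicz–Poincaré inequality, `p > 1`. -/
theorem orlicz_poincare_p_gt_one_sufficient
    (a b : ℝ) (hab : a < b) (p pc : ℝ) (hp : 1 < p) (hpc : pc = p / (p - 1))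
    (Φ Φinv μ w : ℝ → ℝ)
    (hΦ : IsYoung Φ) (hsub : Submult Φ) (hinv : IsYoungInv Φ Φinv)
    (hΛ : ConvexOn ℝ Set.univ (fun t => Φ (|t| ^ (1 / p))))
    (hμ : IsWeight μ a b) (hw : IsWeight w a b)
    (ν : Measure ℝ) [IsFiniteMeasure ν] (hν : 0 < ν (Set.Icc a b))
    (K : ℝ≥0∞)
    (hK : K = (ν (Set.Icc a b))⁻¹ *
      ((⨆ x ∈ Set.Ioo a b,
          ((ENNReal.ofReal (Φinv ((wInt μ x b).toReal ^ (-(1/2) : ℝ)))) ^ 2)⁻¹ *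
            (∫⁻ t in Set.Icc a x,
              ENNReal.ofReal ((ν (Set.Icc a t)).toReal ^ pc * w t ^ (1 - pc))) ^ (1 / pc)) +
        (⨆ x ∈ Set.Ioo a b,
          ((ENNReal.ofReal (Φinv ((wInt μ a x).toReal ^ (-(1/2) : ℝ)))) ^ 2)⁻¹ *
            (∫⁻ t in Set.Icc x b,
              ENNReal.ofReal ((ν (Set.Icc t b)).toReal ^ pc * w t ^ (1 - pc))) ^ (1 / pc))))
    (hKfin : K < ⊤) :
    ∀ f f' : ℝ → ℝ, LipschitzWithDeriv f f' a b →
      luxNorm Φ μ a b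
        (fun x => f x - (ν (Set.Icc a b)).toReal⁻¹ * ∫ y in Set.Icc a b, f y ∂ν)
        ≤ ENNReal.ofReal (2 * (Φinv (1/2))⁻¹) * K * lpNorm w p a b f' := by
  intro f f' hff
  obtain ⟨⟨Kf, hf⟩, hd⟩ := hff
  have hp0 : 0 < p := by linarith
  have hpq : p.HolderConjugate pc := by
    rw [Real.holderConjugate_iff]
    refine ⟨hp, ?_⟩
    have : p - 1 ≠ 0 := by linarith
    rw [hpc]; field_simp; ring
  have hq0 : 0 < pc := hpq.symm.pos
  have hφ0 : 0 < Φinv (1/2) := by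
    refine lt_of_le_of_ne (hinv.1 _ (by norm_num)) ?_
    intro h
    have h1 := hinv.2.1 (1/2) (by norm_num)
    rw [← h, hΦ.2.2.1] at h1
    norm_num at h1
  set B1 := ⨆ x ∈ Set.Ioo a b,
          ((ENNReal.ofReal (Φinv ((wInt μ x b).toReal ^ (-(1/2) : ℝ)))) ^ 2)⁻¹ *
            (∫⁻ t in Set.Icc a x,
              ENNReal.ofReal ((ν (Set.Icc a t)).toReal ^ pc * w t ^ (1 - pc))) ^ (1 / pc) with hB1
  set B2 := ⨆ x ∈ Set.Ioo a b,
          ((ENNReal.ofReal (Φinv ((wInt μ a x).toReal ^ (-(1/2) : ℝ)))) ^ 2)⁻¹ *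
            (∫⁻ t in Set.Icc x b,
              ENNReal.ofReal ((ν (Set.Icc t b)).toReal ^ pc * w t ^ (1 - pc))) ^ (1 / pc) with hB2
  have hB1' : ∀ x ∈ Set.Ioo a b,
          ((ENNReal.ofReal (Φinv ((wInt μ x b).toReal ^ (-(1/2) : ℝ)))) ^ 2)⁻¹ *
            (∫⁻ t in Set.Icc a x,
              ENNReal.ofReal ((ν (Set.Icc a t)).toReal ^ pc * w t ^ (1 - pc))) ^ (1 / pc) ≤ B1 :=
    fun x hx => le_iSup₂_of_le x hx le_rfl
  have hB2' : ∀ x ∈ Set.Ioo a b,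
          ((ENNReal.ofReal (Φinv ((wInt μ a x).toReal ^ (-(1/2) : ℝ)))) ^ 2)⁻¹ *
            (∫⁻ t in Set.Icc x b,
              ENNReal.ofReal ((ν (Set.Icc t b)).toReal ^ pc * w t ^ (1 - pc))) ^ (1 / pc) ≤ B2 :=
    fun x hx => le_iSup₂_of_le x hx le_rfl
  clear_value B1 B2
  have hνt : ν (Icc a b) ≠ ⊤ := measure_ne_top _ _
  have hBs : B1 + B2 ≠ ⊤ := by
    intro h
    rw [hK, h, ENNReal.mul_top (ENNReal.inv_ne_zero.2 hνt)] at hKfin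
    exact lt_irrefl _ hKfin
  obtain ⟨hB1t, hB2t⟩ := ENNReal.add_ne_top.1 hBs
  -- the weighted norm in terms of `deriv f`
  have hJ : lpNorm w p a b f' =
      (∫⁻ t, ‖deriv f t‖ₑ ^ p * ENNReal.ofReal (w t) ∂(volume.restrict (Ioo a b))) ^ (1 / p) := by
    unfold _root_.lpNorm
    rw [Measure.restrict_congr_set (Ioo_ae_eq_Icc (μ := volume) (a := a) (b := b)).symm]
    congr 1
    refine lintegral_congr_ae ?_
    filter_upwards [hd] with t ht
    rw [ht.deriv, ENNReal.ofReal_mul (by positivity),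
      ← ENNReal.ofReal_rpow_of_nonneg (abs_nonneg _) hp0.le, Real.enorm_eq_ofReal_abs]
  set L := lpNorm w p a b f' with hLdef
  by_cases hLt : L = ⊤
  · have hK0 : K ≠ 0 := by
      intro h0
      rw [hK, mul_eq_zero, add_eq_zero] at h0
      rcases h0 with h0 | ⟨h1, h2⟩
      · exact hνt (ENNReal.inv_eq_zero.1 h0)
      have hz : ∀ (U : ℝ) (V : ℝ≥0∞),
          ((ENNReal.ofReal U) ^ 2)⁻¹ * V ^ (1 / pc) ≤ 0 → V = 0 := by
        intro U V h
        rcases mul_eq_zero.1 (le_antisymm h zero_le) with h | h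
        · exact absurd (ENNReal.inv_eq_zero.1 h) (ENNReal.pow_ne_top ENNReal.ofReal_ne_top)
        · rw [ENNReal.rpow_eq_zero_iff] at h
          rcases h with h | h
          · exact h.1
          · have : 0 < 1 / pc := by positivity
            linarith [h.2]
      set x1 := (a + 2 * b) / 3 with hx1
      set x2 := (2 * a + b) / 3 with hx2
      have z1 := hz _ _ ((hB1' x1 ⟨by linarith, by linarith⟩).trans_eq h1)
      have z2 := hz _ _ ((hB2' x2 ⟨by linarith, by linarith⟩).trans_eq h2)
      have hN1m : Measurable fun t => ν (Icc a t) :=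
        Monotone.measurable fun s t h => measure_mono (Icc_subset_Icc_right h)
      have hN2m : Measurable fun t => ν (Icc t b) :=
        Antitone.measurable fun s t h => measure_mono (Icc_subset_Icc_left h)
      have hwm := hw.1
      have k1 : Measurable fun t => ENNReal.ofReal ((ν (Icc a t)).toReal ^ pc * w t ^ (1 - pc)) :=
        ((hN1m.ennreal_toReal.pow_const pc).mul (hwm.pow_const _)).ennreal_ofReal
      have k2 : Measurable fun t => ENNReal.ofReal ((ν (Icc t b)).toReal ^ pc * w t ^ (1 - pc)) :=
        ((hN2m.ennreal_toReal.pow_const pc).mul (hwm.pow_const _)).ennreal_ofReal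
      rw [lintegral_eq_zero_iff k1] at z1
      rw [lintegral_eq_zero_iff k2] at z2
      have s1 : Ioo x2 x1 ⊆ Icc a x1 := fun t ht => ⟨by linarith [ht.1], ht.2.le⟩
      have s2 : Ioo x2 x1 ⊆ Icc x2 b := fun t ht => ⟨ht.1.le, by linarith [ht.2]⟩
      have s3 : Ioo x2 x1 ⊆ Icc a b := fun t ht => ⟨by linarith [ht.1], by linarith [ht.2]⟩
      have y1 := ae_restrict_of_ae_restrict_of_subset s1 z1
      have y2 := ae_restrict_of_ae_restrict_of_subset s2 z2
      have y3 := ae_restrict_of_ae_restrict_of_subset s3 hw.2.2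
      have hne : (ae ((volume : Measure ℝ).restrict (Ioo x2 x1))).NeBot := by
        rw [ae_restrict_neBot, Real.volume_Ioo]
        simp only [ne_eq, ENNReal.ofReal_eq_zero, not_le]
        linarith
      obtain ⟨t, t1, t2, t3, t4⟩ :=
        (y1.and (y2.and (y3.and (ae_restrict_mem measurableSet_Ioo)))).exists
      have hzero : ∀ E : Set ℝ, ENNReal.ofReal ((ν E).toReal ^ pc * w t ^ (1 - pc)) = 0 →
          ν E = 0 := by
        intro E hE
        rw [ENNReal.ofReal_eq_zero] at hE
        have hwp : 0 < w t ^ (1 - pc) := Real.rpow_pos_of_pos t3 _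
        by_contra hne0
        have : 0 < (ν E).toReal := ENNReal.toReal_pos hne0 (measure_ne_top _ _)
        have : 0 < (ν E).toReal ^ pc * w t ^ (1 - pc) := by positivity
        linarith
      have n1 := hzero _ t1
      have n2 := hzero _ t2
      have : ν (Icc a b) ≤ 0 := by
        calc ν (Icc a b) ≤ ν (Icc a t ∪ Icc t b) := measure_mono Icc_subset_Icc_union_Icc
          _ ≤ ν (Icc a t) + ν (Icc t b) := measure_union_le _ _
          _ = 0 := by rw [n1, n2, add_zero]
      exact absurd this (not_le.2 hν)
    rw [hLt, ENNReal.mul_top]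
    · exact le_top
    · refine mul_ne_zero ?_ hK0
      simpa using hφ0
  · set n := (ν (Icc a b)).toReal with hn
    have hn0 : 0 < n := ENNReal.toReal_pos hν.ne' hνt
    set g : ℝ → ℝ := fun ε => 2 * (Φinv (1/2))⁻¹ *
      (n⁻¹ * ((B1.toReal + ε) + (B2.toReal + ε))) * (L.toReal + ε) with hg
    have hmain : ∀ ε, 0 < ε → luxNorm Φ μ a b
        (fun x => f x - n⁻¹ * ∫ y in Set.Icc a b, f y ∂ν) ≤ ENNReal.ofReal (g ε) := by
      intro ε hε
      have hle : ∀ X : ℝ≥0∞, X ≠ ⊤ → X ≤ ENNReal.ofReal (X.toReal + ε) := by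
        intro X hX
        conv_lhs => rw [← ENNReal.ofReal_toReal hX]
        exact ENNReal.ofReal_le_ofReal (by linarith)
      refine aux_combine hpq hΦ hsub hinv hΛ hμ hw ν hν (B1.toReal + ε) (B2.toReal + ε)
        (L.toReal + ε) (by positivity) (by positivity) (by positivity)
        (fun x hx => (hB1' x hx).trans (hle _ hB1t))
        (fun x hx => (hB2' x hx).trans (hle _ hB2t)) hf ?_
      have h1 := ENNReal.rpow_le_rpow (hle L hLt) hp0.le
      refine le_trans (le_of_eq ?_) h1
      rw [hJ, ← ENNReal.rpow_mul, one_div_mul_cancel hp0.ne', ENNReal.rpow_one]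
    have hg0 : ENNReal.ofReal (2 * (Φinv (1/2))⁻¹) * K * L = ENNReal.ofReal (g 0) := by
      simp only [hg, add_zero]
      rw [ENNReal.ofReal_mul (p := 2 * (Φinv (1/2))⁻¹ * (n⁻¹ * (B1.toReal + B2.toReal)))
          (by positivity),
        ENNReal.ofReal_mul (p := 2 * (Φinv (1/2))⁻¹) (by positivity),
        ENNReal.ofReal_mul (p := n⁻¹) (by positivity), ENNReal.ofReal_inv_of_pos hn0,
        ENNReal.ofReal_add (by positivity) (by positivity), ENNReal.ofReal_toReal hB1t,
        ENNReal.ofReal_toReal hB2t, ENNReal.ofReal_toReal hLt, hn, ENNReal.ofReal_toReal hνt, hK]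
    rw [hg0]
    have hcont : Continuous fun ε => ENNReal.ofReal (g ε) :=
      ENNReal.continuous_ofReal.comp (by fun_prop)
    have ht : Tendsto (fun ε => ENNReal.ofReal (g ε)) (nhdsWithin 0 (Ioi 0))
        (nhds (ENNReal.ofReal (g 0))) := (hcont.tendsto 0).mono_left nhdsWithin_le_nhds
    refine ge_of_tendsto ht ?_
    filter_upwards [self_mem_nhdsWithin] with ε hε
    exact hmain ε hε
end
end

section
/- Let -∞ < a < b < ∞, 1 < p < ∞ with conjugate exponent p' = p/(p−1), let μ and w be weights on [a,b], let ν be a nonnegative finite Borel measure on [a,b] with ν[a,b] > 0, and let Φ be a Young function that is invertible on [0,∞). Suppose there is a constant C such that ‖ f − (1/ν[a,b]) ∫_a^b f dν ‖_{L_μ^Φ[a,b]} ≤ C · ‖f'‖_{L_w^p[a,b]} for all Lipschitz continuous functions f : [a,b] → ℝ. Then K̃_{p,Φ}(μ,ν,w) := (1/ν[a,b]) · ( sup_{a<x<b} [Φ^{-1}(1/μ[x,b])]^{-1} (∫_a^x ν[a,t]^{p'} w(t)^{1−p'} dt)^{1/p'} + sup_{a<x<b} [Φ^{-1}(1/μ[a,x])]^{-1}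 (∫_x^b ν[t,b]^{p'} w(t)^{1−p'} dt)^{1/p'} ) satisfies K̃_{p,Φ}(μ,ν,w) ≤ 2C; in particular it is finite. -/
open MeasureTheory Set Filter
open scoped ENNReal NNReal

noncomputable section

lemma phi_le_imp {Φ Φinv : ℝ → ℝ} (hΦ : IsYoung Φ) (hinv : IsYoungInv Φ Φinv)
    {z r : ℝ} (hz : 0 ≤ z) (hr : 0 ≤ r) (h : Φ z ≤ r) : z ≤ Φinv r := by
  obtain ⟨hc, -, h0, hn, -⟩ := hΦ
  obtain ⟨hi0, hi1, hi2⟩ := hinv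
  by_contra hlt
  push Not at hlt
  set y := Φinv r with hy
  have hy0 : 0 ≤ y := hi0 r hr
  have hz0 : 0 < z := lt_of_le_of_lt hy0 hlt
  have hyr : Φ y = r := hi1 r hr
  have hq1 : y / z < 1 := (div_lt_one hz0).2 hlt
  have hq0 : 0 ≤ y / z := by positivity
  have key := hc.2 (mem_univ z) (mem_univ (0:ℝ)) hq0 (by linarith : 0 ≤ 1 - y / z) (by ring)
  have e : (y / z) • z + (1 - y / z) • (0:ℝ) = y := by
    simp; field_simp
  rw [e, h0] at key
  simp only [smul_eq_mul, mul_zero, add_zero] at key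
  have h1 : Φ z = Φ y := by
    have := hn z
    nlinarith
  have h2 : z = y := by rw [← hi2 z hz, ← hi2 y hy0, h1]
  linarith

lemma lux_lower {Φ Φinv μ : ℝ → ℝ} {a b : ℝ} (hΦ : IsYoung Φ) (hinv : IsYoungInv Φ Φinv)
    (hμ : IsWeight μ a b) {T : Set ℝ} (hT : MeasurableSet T) (hTab : T ⊆ Icc a b)
    {F : ℝ → ℝ} {m : ℝ} (hm : 0 ≤ m) (hF : ∀ x ∈ T, F x = -m)
    (hpos : (∫⁻ t in T, ENNReal.ofReal (μ t)) ≠ 0) :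
    (ENNReal.ofReal (Φinv ((∫⁻ t in T, ENNReal.ofReal (μ t)).toReal⁻¹)))⁻¹ * ENNReal.ofReal m
      ≤ luxNorm Φ μ a b F := by
  refine le_sInf ?_
  rintro k ⟨c, hc, rfl, hk⟩
  set M := ∫⁻ t in T, ENNReal.ofReal (μ t) with hM
  have h1 : ENNReal.ofReal (Φ (m / c)) * M ≤ 1 := by
    refine le_trans ?_ hk
    refine le_trans ?_ (lintegral_mono_set hTab)
    rw [hM, ← lintegral_const_mul _ hμ.1.ennreal_ofReal]
    refine le_of_eq (setLIntegral_congr_fun hT ?_)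
    intro x hx
    simp only [hF x hx]
    rw [neg_div, hΦ.2.1, ENNReal.ofReal_mul (hΦ.2.2.2.1 _)]
  have h2 : Φ (m / c) ≤ M.toReal⁻¹ := by
    have h3 : ENNReal.ofReal (Φ (m / c)) ≤ M⁻¹ := ENNReal.le_inv_iff_mul_le.2 h1
    have h4 := ENNReal.toReal_mono (ENNReal.inv_ne_top.2 hpos) h3
    rwa [ENNReal.toReal_ofReal (hΦ.2.2.2.1 _), ENNReal.toReal_inv] at h4
  have h5 := phi_le_imp hΦ hinv (by positivity : 0 ≤ m / c) (by positivity) h2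
  rw [div_le_iff₀ hc] at h5
  rw [mul_comm, ← div_eq_mul_inv]
  refine ENNReal.div_le_of_le_mul ?_
  rw [← ENNReal.ofReal_mul hc.le, mul_comm]
  exact ENNReal.ofReal_le_ofReal h5

lemma core_B {p pc C : ℝ} (hp : 1 < p) (hpc : pc = p / (p - 1)) {w V : ℝ → ℝ}
    (hw : Measurable w) (hw0 : ∀ x, 0 ≤ w x) (hV : Measurable V) (hV0 : ∀ x, 0 ≤ V x)
    {D : ℝ} (hVD : ∀ x, V x ≤ D) {S : Set ℝ} (hS : MeasurableSet S)
    (hSfin : volume S ≠ ∞) (hwS : ∀ᵐ x ∂(volume.restrict S), 0 < w x) {B : ℝ≥0∞}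
    (H : ∀ h : ℝ → ℝ, Measurable h → (∀ x, 0 ≤ h x) → (∃ D, ∀ x, h x ≤ D) →
      B * ∫⁻ t in S, ENNReal.ofReal (h t * V t) ≤
        ENNReal.ofReal C * (∫⁻ t in S, ENNReal.ofReal (h t ^ p * w t)) ^ (1 / p)) :
    B * (∫⁻ t in S, ENNReal.ofReal (V t ^ pc * w t ^ (1 - pc))) ^ (1 / pc)
      ≤ ENNReal.ofReal C := by
  have hp1 : 0 < p - 1 := by linarith
  have hpc1 : 1 < pc := by rw [hpc, lt_div_iff₀ hp1]; linarith
  have hpcp : (pc - 1) * p = pc := by rw [hpc]; field_simp; ring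
  have hpp : 1 / p + 1 / pc = 1 := by rw [hpc]; field_simp; ring
  have hD0 : 0 ≤ D := (hV0 0).trans (hVD 0)
  set E : ℕ → Set ℝ := fun n => {t | 1 / ((n:ℝ) + 1) ≤ w t} with hE
  have hEm : ∀ n, MeasurableSet (E n) := fun n => measurableSet_le measurable_const hw
  set G : ℝ → ℝ≥0∞ := fun t => ENNReal.ofReal (V t ^ pc * w t ^ (1 - pc)) with hG
  have hGm : Measurable G := by
    apply Measurable.ennreal_ofReal; exact (hV.pow_const _).mul (hw.pow_const _)
  have hwE : ∀ n t, t ∈ E n → 0 < w t := fun n t ht => lt_of_lt_of_le (by positivity) ht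
  have hbd : ∀ n t, t ∈ E n → w t ^ (1 - pc) ≤ (1 / ((n:ℝ) + 1)) ^ (1 - pc) := by
    intro n t ht
    exact Real.rpow_le_rpow_of_nonpos (by positivity) ht (by linarith)
  set I : ℕ → ℝ≥0∞ := fun n => ∫⁻ t in S, (E n).indicator G t with hI
  have hIfin : ∀ n, I n ≠ ∞ := by
    intro n
    have : I n ≤ ∫⁻ t in S, ENNReal.ofReal (D ^ pc * (1 / ((n:ℝ) + 1)) ^ (1 - pc)) := by
      refine lintegral_mono fun t => ?_
      by_cases ht : t ∈ E n
      · rw [indicator_of_mem ht]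
        refine ENNReal.ofReal_le_ofReal ?_
        exact mul_le_mul (Real.rpow_le_rpow (hV0 t) (hVD t) (by linarith)) (hbd n t ht)
          (Real.rpow_nonneg (hw0 t) _) (by positivity)
      · rw [indicator_of_notMem ht]; exact zero_le
    refine ne_top_of_le_ne_top ?_ this
    rw [setLIntegral_const]
    exact ENNReal.mul_ne_top ENNReal.ofReal_ne_top hSfin
  have step : ∀ n, B * (I n) ^ (1 / pc) ≤ ENNReal.ofReal C := by
    intro n
    set h : ℝ → ℝ := (E n).indicator (fun t => V t ^ (pc - 1) * w t ^ (1 - pc)) with hh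
    have h1 := H h ?_ ?_ ?_
    rotate_left
    · exact ((hV.pow_const _).mul (hw.pow_const _)).indicator (hEm n)
    · intro x; exact indicator_nonneg (fun t _ => mul_nonneg (Real.rpow_nonneg (hV0 t) _)
        (Real.rpow_nonneg (hw0 t) _)) x
    · refine ⟨D ^ (pc - 1) * (1 / ((n:ℝ) + 1)) ^ (1 - pc), fun t => ?_⟩
      by_cases ht : t ∈ E n
      · rw [hh, indicator_of_mem ht]
        exact mul_le_mul (Real.rpow_le_rpow (hV0 t) (hVD t) (by linarith)) (hbd n t ht)
          (Real.rpow_nonneg (hw0 t) _) (by positivity)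
      · rw [hh, indicator_of_notMem ht]; positivity
    have e1 : ∀ t, ENNReal.ofReal (h t * V t) = (E n).indicator G t := by
      intro t
      by_cases ht : t ∈ E n
      · rw [hh, indicator_of_mem ht, indicator_of_mem ht, hG]
        congr 1
        rcases (hV0 t).eq_or_lt with hv | hv
        · rw [← hv, Real.zero_rpow (by linarith : pc ≠ 0)]; simp
        · rw [Real.rpow_sub_one hv.ne']; field_simp
      · rw [hh, indicator_of_notMem ht, indicator_of_notMem ht]; simp
    have e2 : ∀ t, ENNReal.ofReal (h t ^ p * w t) = (E n).indicator G t := by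
      intro t
      by_cases ht : t ∈ E n
      · rw [hh, indicator_of_mem ht, indicator_of_mem ht, hG]
        congr 1
        have hwt := hwE n t ht
        rw [Real.mul_rpow (Real.rpow_nonneg (hV0 t) _) (Real.rpow_nonneg (hw0 t) _),
          ← Real.rpow_mul (hV0 t), ← Real.rpow_mul (hw0 t), hpcp, mul_assoc]
        congr 1
        nth_rewrite 2 [← Real.rpow_one (w t)]
        rw [← Real.rpow_add hwt]
        congr 1
        linarith
      · rw [hh, indicator_of_notMem ht, indicator_of_notMem ht,
          Real.zero_rpow (by linarith : p ≠ 0)]; simp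
    simp only [e1, e2] at h1
    change B * I n ≤ ENNReal.ofReal C * (I n) ^ (1 / p) at h1
    by_cases hI0 : I n = 0
    · rw [hI0, ENNReal.zero_rpow_of_pos (by positivity)]; simp
    · have hne0 : (I n) ^ (1 / p) ≠ 0 := by
        simp only [ne_eq, ENNReal.rpow_eq_zero_iff, hI0, hIfin n]; simp
      have hnet : (I n) ^ (1 / p) ≠ ∞ := ENNReal.rpow_ne_top_of_nonneg (by positivity) (hIfin n)
      have : I n = (I n) ^ (1 / pc) * (I n) ^ (1 / p) := by
        rw [← ENNReal.rpow_add _ _ hI0 (hIfin n), add_comm, hpp, ENNReal.rpow_one]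
      rw [this, ← mul_assoc] at h1
      rw [← this] at h1
      exact (ENNReal.mul_le_mul_iff_left hne0 hnet).1 h1
  have hsup : ∫⁻ t in S, G t = ⨆ n, I n := by
    rw [← lintegral_iSup]
    · refine lintegral_congr_ae ?_
      filter_upwards [hwS] with t ht
      obtain ⟨n, hn⟩ := exists_nat_one_div_lt ht
      refine le_antisymm ?_ (iSup_le fun n => indicator_le_self _ _ _)
      refine le_iSup_of_le n ?_
      rw [indicator_of_mem]
      exact hn.le
    · exact fun n => hGm.indicator (hEm n)
    · intro i j hij t
      refine indicator_le_indicator_of_subset ?_ (fun _ => zero_le) t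
      intro s hs
      have : (i:ℝ) ≤ j := by exact_mod_cast hij
      have h2 : 1 / ((j:ℝ) + 1) ≤ 1 / ((i:ℝ) + 1) := by gcongr
      exact le_trans h2 hs
  have hmono : (∫⁻ t in S, G t) ^ (1 / pc) = ⨆ n, (I n) ^ (1 / pc) := by
    rw [hsup]
    have := (ENNReal.orderIsoRpow (1 / pc) (by positivity)).map_iSup I
    exact this
  rw [hmono, ENNReal.mul_iSup]
  exact iSup_le step

lemma core_C {p C a b : ℝ} (hp : 1 < p) {Φ Φinv μ w : ℝ → ℝ}
    (hΦ : IsYoung Φ) (hinv : IsYoungInv Φ Φinv)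
    (hμ : IsWeight μ a b) {ν : Measure ℝ} [IsFiniteMeasure ν] (hν : 0 < ν (Set.Icc a b))
    (hP : ∀ f f' : ℝ → ℝ, LipschitzWithDeriv f f' a b →
      luxNorm Φ μ a b
        (fun x => f x - (ν (Set.Icc a b)).toReal⁻¹ * ∫ y in Set.Icc a b, f y ∂ν)
        ≤ ENNReal.ofReal C * lpNorm w p a b f')
    {S T : Set ℝ} (hS : MeasurableSet S) (hSab : S ⊆ Icc a b)
    (hT : MeasurableSet T) (hTab : T ⊆ Icc a b)
    (hpos : (∫⁻ t in T, ENNReal.ofReal (μ t)) ≠ 0)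
    {R : Set (ℝ × ℝ)} (hR : MeasurableSet R) {V : ℝ → ℝ}
    (hVR : ∀ t ∈ S, ENNReal.ofReal (V t) = ν ({s | (s, t) ∈ R} ∩ Icc a b))
    {h f f' : ℝ → ℝ} (hh : Measurable h) (hh0 : ∀ x, 0 ≤ h x)
    (hf : LipschitzWithDeriv f f' a b) (hf' : ∀ t, |f' t| = S.indicator h t)
    (hfT : ∀ s ∈ T, f s = 0) (hf0 : ∀ s ∈ Icc a b, 0 ≤ f s)
    (hfR : ∀ s ∈ Icc a b, ENNReal.ofReal (f s) =
      ∫⁻ t in S, R.indicator (fun _ => (1:ℝ≥0∞)) (s, t) * ENNReal.ofReal (h t)) :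
    ((ν (Icc a b))⁻¹ *
      (ENNReal.ofReal (Φinv ((∫⁻ t in T, ENNReal.ofReal (μ t)).toReal⁻¹)))⁻¹) *
      ∫⁻ t in S, ENNReal.ofReal (h t * V t) ≤
        ENNReal.ofReal C * (∫⁻ t in S, ENNReal.ofReal (h t ^ p * w t)) ^ (1 / p) := by
  have e1 : lpNorm w p a b f' = (∫⁻ t in S, ENNReal.ofReal (h t ^ p * w t)) ^ (1 / p) := by
    unfold _root_.lpNorm
    congr 1
    rw [← lintegral_indicator measurableSet_Icc, ← lintegral_indicator hS]
    congr 1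
    funext t
    by_cases ht : t ∈ S
    · rw [indicator_of_mem ht, indicator_of_mem (hSab ht), hf', indicator_of_mem ht]
    · rw [indicator_of_notMem ht]
      by_cases ht2 : t ∈ Icc a b
      · rw [indicator_of_mem ht2, hf', indicator_of_notMem ht,
          Real.zero_rpow (by linarith : p ≠ 0)]; simp
      · rw [indicator_of_notMem ht2]
  have hint : Integrable f (ν.restrict (Icc a b)) := by
    obtain ⟨K, hK⟩ := hf.1
    exact hK.continuousOn.integrableOn_compact isCompact_Icc
  have hnn : 0 ≤ᵐ[ν.restrict (Icc a b)] f := by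
    rw [EventuallyLE, ae_restrict_iff' measurableSet_Icc]
    exact Eventually.of_forall hf0
  have e2 : ENNReal.ofReal (∫ y in Icc a b, f y ∂ν) = ∫⁻ t in S, ENNReal.ofReal (h t * V t) := by
    rw [ofReal_integral_eq_lintegral_ofReal hint hnn,
      setLIntegral_congr_fun measurableSet_Icc hfR, lintegral_lintegral_swap]
    · refine setLIntegral_congr_fun hS ?_
      intro t ht
      simp only
      have hRt : MeasurableSet {s | (s, t) ∈ R} := measurable_prodMk_right hR
      rw [lintegral_mul_const, ENNReal.ofReal_mul (hh0 t), hVR t ht, mul_comm]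
      · congr 1
        have : (fun s => R.indicator (fun _ => (1:ℝ≥0∞)) (s, t)) =
          {s | (s, t) ∈ R}.indicator (fun _ => (1:ℝ≥0∞)) := by
          funext s; simp [indicator]
        rw [this, lintegral_indicator hRt]
        simp [Measure.restrict_apply hRt]
      · exact (measurable_const.indicator hR).comp measurable_prodMk_right
    · apply Measurable.aemeasurable
      exact (measurable_const.indicator hR).mul (hh.comp measurable_snd).ennreal_ofReal
  have hm : 0 ≤ ∫ y in Icc a b, f y ∂ν := integral_nonneg_of_ae hnn
  have hνt : ν (Icc a b) ≠ ∞ := measure_ne_top _ _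
  have hνpos : 0 < (ν (Icc a b)).toReal := ENNReal.toReal_pos hν.ne' hνt
  have key := lux_lower (a := a) (b := b) hΦ hinv hμ hT hTab
    (F := fun x => f x - (ν (Set.Icc a b)).toReal⁻¹ * ∫ y in Set.Icc a b, f y ∂ν)
    (m := (ν (Set.Icc a b)).toReal⁻¹ * ∫ y in Set.Icc a b, f y ∂ν)
    (by positivity) (fun x hx => by simp only [hfT x hx]; ring) hpos
  have key2 := key.trans (hP f f' hf)
  rw [e1, ENNReal.ofReal_mul (by positivity), e2, ENNReal.ofReal_inv_of_pos hνpos,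
    ENNReal.ofReal_toReal hνt] at key2
  refine le_trans (le_of_eq ?_) key2
  ring

lemma weight_pos {μ : ℝ → ℝ} {a b x y : ℝ} (hμ : IsWeight μ a b) (hxy : x < y)
    (hsub : Icc x y ⊆ Icc a b) : (∫⁻ t in Icc x y, ENNReal.ofReal (μ t)) ≠ 0 := by
  intro h0
  rw [lintegral_eq_zero_iff hμ.1.ennreal_ofReal] at h0
  have h1 := ae_restrict_of_ae_restrict_of_subset hsub hμ.2.2
  have h2 : ∀ᵐ t ∂(volume.restrict (Icc x y)), False := by
    filter_upwards [h0, h1] with t ht1 ht2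
    simp at ht1
    linarith
  rw [eventually_false_iff_eq_bot, ae_eq_bot, Measure.restrict_eq_zero, Real.volume_Icc] at h2
  simp at h2
  linarith

lemma ind_bound {S : Set ℝ} {h : ℝ → ℝ} (hS : MeasurableSet S) (hh : Measurable h)
    (hh0 : ∀ x, 0 ≤ h x) {D : ℝ} (hD : ∀ x, h x ≤ D) :
    Measurable (S.indicator h) ∧ (∀ x, 0 ≤ S.indicator h x) ∧ (∀ x, ‖S.indicator h x‖ ≤ D) ∧
      (∀ x y, IntervalIntegrable (S.indicator h) volume x y) ∧
      LocallyIntegrable (S.indicator h) volume := by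
  have h1 : Measurable (S.indicator h) := hh.indicator hS
  have h2 : ∀ x, 0 ≤ S.indicator h x := fun x => indicator_nonneg (fun t _ => hh0 t) x
  have h3 : ∀ x, ‖S.indicator h x‖ ≤ D := by
    intro x
    rw [Real.norm_of_nonneg (h2 x)]
    exact (indicator_le_self' (fun t _ => hh0 t) x).trans (hD x)
  have h5 : LocallyIntegrable (S.indicator h) volume := by
    have hc : LocallyIntegrable (fun _ : ℝ => D) volume := locallyIntegrable_const D
    refine hc.mono h1.aestronglyMeasurable (Eventually.of_forall fun x => ?_)
    exact (h3 x).trans (le_abs_self D)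
  exact ⟨h1, h2, h3, fun x y => (h5.integrableOn_isCompact isCompact_uIcc).intervalIntegrable, h5⟩

lemma lip_int {g : ℝ → ℝ} {D a b : ℝ} (c : ℝ) (hD0 : 0 ≤ D) (hg : ∀ x, ‖g x‖ ≤ D)
    (hi : ∀ x y, IntervalIntegrable g volume x y) :
    ∃ K, LipschitzOnWith K (fun s => ∫ t in c..s, g t) (Icc a b) := by
  refine ⟨D.toNNReal, LipschitzWith.lipschitzOnWith (LipschitzWith.of_dist_le_mul ?_)⟩
  intro s s'
  rw [Real.dist_eq, intervalIntegral.integral_interval_sub_left (hi _ _) (hi _ _),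
    Real.coe_toNNReal D hD0, Real.dist_eq]
  exact intervalIntegral.norm_integral_le_of_norm_le_const (fun x _ => hg x)

lemma ofReal_int {S : Set ℝ} {h : ℝ → ℝ} (hS : MeasurableSet S) 
    (hh0 : ∀ x, 0 ≤ S.indicator h x)
    (hi : ∀ x y, IntervalIntegrable (S.indicator h) volume x y)
    {c d s : ℝ} (hcd : c ≤ d) {R : Set (ℝ × ℝ)} (hR : ∀ t ∈ S, (s, t) ∈ R ↔ t ∈ Icc c d) :
    ENNReal.ofReal (∫ t in c..d, S.indicator h t) =
      ∫⁻ t in S, R.indicator (fun _ => (1:ℝ≥0∞)) (s, t) * ENNReal.ofReal (h t) := by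
  rw [intervalIntegral.integral_of_le hcd, ← integral_Icc_eq_integral_Ioc,
    ofReal_integral_eq_lintegral_ofReal
      ((intervalIntegrable_iff_integrableOn_Icc_of_le hcd).1 (hi c d))
      (Eventually.of_forall hh0), ← lintegral_indicator measurableSet_Icc,
    ← lintegral_indicator hS]
  congr 1
  funext t
  by_cases ht : t ∈ S
  · by_cases ht2 : t ∈ Icc c d
    · simp [indicator_of_mem ht, indicator_of_mem ht2, indicator_of_mem ((hR t ht).2 ht2)]
    · have : (s, t) ∉ R := fun hc => ht2 ((hR t ht).1 hc)
      rw [indicator_of_mem ht, indicator_of_notMem ht2, indicator_of_notMem this, zero_mul]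
  · rw [indicator_of_notMem ht]
    by_cases ht2 : t ∈ Icc c d
    · rw [indicator_of_mem ht2, indicator_of_notMem ht]; simp
    · rw [indicator_of_notMem ht2]

/-- Necessity: if the `(Φ,p)` Orlicz–Poincaré inequality holds with constant `C` (`p > 1`),
then `K̃_{p,Φ}(μ,ν,w) ≤ 2C` (in particular it is finite). -/
theorem orlicz_poincare_p_gt_one_necessary
    (a b : ℝ) (hab : a < b) (p pc : ℝ) (hp : 1 < p) (hpc : pc = p / (p - 1))
    (Φ Φinv μ w : ℝ → ℝ)
    (hΦ : IsYoung Φ) (hinv : IsYoungInv Φ Φinv)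
    (hμ : IsWeight μ a b) (hw : IsWeight w a b)
    (ν : Measure ℝ) [IsFiniteMeasure ν] (hν : 0 < ν (Set.Icc a b))
    (C : ℝ)
    (hP : ∀ f f' : ℝ → ℝ, LipschitzWithDeriv f f' a b →
      luxNorm Φ μ a b
        (fun x => f x - (ν (Set.Icc a b)).toReal⁻¹ * ∫ y in Set.Icc a b, f y ∂ν)
        ≤ ENNReal.ofReal C * lpNorm w p a b f')
    (Kt : ℝ≥0∞)
    (hKt : Kt = (ν (Set.Icc a b))⁻¹ *
      ((⨆ x ∈ Set.Ioo a b,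
          (ENNReal.ofReal (Φinv ((wInt μ x b).toReal⁻¹)))⁻¹ *
            (∫⁻ t in Set.Icc a x,
              ENNReal.ofReal ((ν (Set.Icc a t)).toReal ^ pc * w t ^ (1 - pc))) ^ (1 / pc)) +
        (⨆ x ∈ Set.Ioo a b,
          (ENNReal.ofReal (Φinv ((wInt μ a x).toReal⁻¹)))⁻¹ *
            (∫⁻ t in Set.Icc x b,
              ENNReal.ofReal ((ν (Set.Icc t b)).toReal ^ pc * w t ^ (1 - pc))) ^ (1 / pc)))) :
    Kt ≤ ENNReal.ofReal (2 * C) := by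
  have hνt : ν (Icc a b) ≠ ∞ := measure_ne_top _ _
  have half1 : ∀ x ∈ Ioo a b, (ν (Icc a b))⁻¹ *
      ((ENNReal.ofReal (Φinv ((wInt μ x b).toReal⁻¹)))⁻¹ *
            (∫⁻ t in Set.Icc a x,
              ENNReal.ofReal ((ν (Set.Icc a t)).toReal ^ pc * w t ^ (1 - pc))) ^ (1 / pc)) ≤
        ENNReal.ofReal C := by
    intro x hx
    rw [← mul_assoc]
    have hSab : Icc a x ⊆ Icc a b := Icc_subset_Icc_right hx.2.le
    have hTab : Icc x b ⊆ Icc a b := Icc_subset_Icc_left hx.1.le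
    have hmono : Monotone fun t => (ν (Icc a t)).toReal := fun s t hst =>
      ENNReal.toReal_mono (measure_ne_top _ _) (measure_mono (Icc_subset_Icc_right hst))
    refine core_B (V := fun t => (ν (Icc a t)).toReal) (D := (ν univ).toReal) hp hpc hw.1 hw.2.1
      hmono.measurable (fun t => ENNReal.toReal_nonneg)
      (fun t => ENNReal.toReal_mono (measure_ne_top _ _) (measure_mono (subset_univ _)))
      measurableSet_Icc (by simp) (ae_restrict_of_ae_restrict_of_subset hSab hw.2.2) ?_
    rintro h hh hh0 ⟨D, hD⟩
    obtain ⟨g1, g2, g3, g4, g5⟩ := ind_bound (S := Icc a x) measurableSet_Icc hh hh0 hD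
    have hD0 : 0 ≤ D := (hh0 0).trans (hD 0)
    have hfe : ∀ s, ∫ t in s..b, (Icc a x).indicator h t =
        -∫ t in b..s, (Icc a x).indicator h t := fun s => intervalIntegral.integral_symm _ _
    refine core_C (T := Icc x b) (R := {q : ℝ × ℝ | q.1 ≤ q.2}) hp hΦ hinv hμ hν hP
      measurableSet_Icc hSab measurableSet_Icc hTab (weight_pos hμ hx.2 hTab)
      (measurableSet_le measurable_fst measurable_snd) ?_ hh hh0
      (f := fun s => ∫ t in s..b, (Icc a x).indicator h t)
      (f' := fun t => - (Icc a x).indicator h t) ⟨?_, ?_⟩ ?_ ?_ ?_ ?_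
    · intro t ht
      rw [ENNReal.ofReal_toReal (measure_ne_top _ _)]
      congr 1
      ext s
      simp only [mem_Icc, mem_inter_iff, mem_setOf_eq]
      have := ht.2; have := hx.2
      constructor
      · rintro ⟨h1, h2⟩; exact ⟨h2, h1, by linarith⟩
      · rintro ⟨h1, h2, h3⟩; exact ⟨h2, h1⟩
    · obtain ⟨K, hK⟩ := lip_int (a := a) (b := b) b hD0 g3 g4
      refine ⟨K, ?_⟩
      simp only [hfe]
      exact hK.neg
    · refine ae_restrict_of_ae ?_
      filter_upwards [LocallyIntegrable.ae_hasDerivAt_integral g5] with s hs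
      simp only [hfe]
      exact (hs b).neg
    · intro t
      rw [abs_neg, abs_of_nonneg (g2 t)]
    · intro s hs
      rw [intervalIntegral.integral_of_le hs.2]
      refine setIntegral_eq_zero_of_forall_eq_zero fun t ht => ?_
      refine indicator_of_notMem (fun hc => ?_) _
      have := hs.1; have := ht.1; have := hc.2
      linarith
    · intro s hs
      exact intervalIntegral.integral_nonneg hs.2 (fun t _ => g2 t)
    · intro s hs
      refine ofReal_int measurableSet_Icc g2 g4 hs.2 ?_
      intro t ht
      have := ht.2; have := hx.2
      exact ⟨fun h1 => ⟨h1, by linarith⟩, fun h1 => h1.1⟩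
  have half2 : ∀ x ∈ Ioo a b, (ν (Icc a b))⁻¹ *
      ((ENNReal.ofReal (Φinv ((wInt μ a x).toReal⁻¹)))⁻¹ *
            (∫⁻ t in Set.Icc x b,
              ENNReal.ofReal ((ν (Set.Icc t b)).toReal ^ pc * w t ^ (1 - pc))) ^ (1 / pc)) ≤
        ENNReal.ofReal C := by
    intro x hx
    rw [← mul_assoc]
    have hTab : Icc a x ⊆ Icc a b := Icc_subset_Icc_right hx.2.le
    have hSab : Icc x b ⊆ Icc a b := Icc_subset_Icc_left hx.1.le
    have hmono : Antitone fun t => (ν (Icc t b)).toReal := fun s t hst =>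
      ENNReal.toReal_mono (measure_ne_top _ _) (measure_mono (Icc_subset_Icc_left hst))
    refine core_B (V := fun t => (ν (Icc t b)).toReal) (D := (ν univ).toReal) hp hpc hw.1 hw.2.1
      hmono.measurable (fun t => ENNReal.toReal_nonneg)
      (fun t => ENNReal.toReal_mono (measure_ne_top _ _) (measure_mono (subset_univ _)))
      measurableSet_Icc (by simp) (ae_restrict_of_ae_restrict_of_subset hSab hw.2.2) ?_
    rintro h hh hh0 ⟨D, hD⟩
    obtain ⟨g1, g2, g3, g4, g5⟩ := ind_bound (S := Icc x b) measurableSet_Icc hh hh0 hD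
    have hD0 : 0 ≤ D := (hh0 0).trans (hD 0)
    refine core_C (T := Icc a x) (R := {q : ℝ × ℝ | q.2 ≤ q.1}) hp hΦ hinv hμ hν hP
      measurableSet_Icc hSab measurableSet_Icc hTab (weight_pos hμ hx.1 hTab)
      (measurableSet_le measurable_snd measurable_fst) ?_ hh hh0
      (f := fun s => ∫ t in a..s, (Icc x b).indicator h t)
      (f' := fun t => (Icc x b).indicator h t) ⟨?_, ?_⟩ ?_ ?_ ?_ ?_
    · intro t ht
      rw [ENNReal.ofReal_toReal (measure_ne_top _ _)]
      congr 1
      ext s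
      simp only [mem_Icc, mem_inter_iff, mem_setOf_eq]
      have := ht.1; have := hx.1
      constructor
      · rintro ⟨h1, h2⟩; exact ⟨h1, by linarith, h2⟩
      · rintro ⟨h1, h2, h3⟩; exact ⟨h1, h3⟩
    · exact lip_int (a := a) (b := b) a hD0 g3 g4
    · refine ae_restrict_of_ae ?_
      filter_upwards [LocallyIntegrable.ae_hasDerivAt_integral g5] with s hs
      exact hs a
    · intro t
      rw [abs_of_nonneg (g2 t)]
    · intro s hs
      rw [intervalIntegral.integral_of_le hs.1, ← integral_Icc_eq_integral_Ioc,
        integral_Icc_eq_integral_Ico]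
      refine setIntegral_eq_zero_of_forall_eq_zero fun t ht => ?_
      refine indicator_of_notMem (fun hc => ?_) _
      have := hs.2; have := ht.2; have := hc.1
      linarith
    · intro s hs
      exact intervalIntegral.integral_nonneg hs.1 (fun t _ => g2 t)
    · intro s hs
      refine ofReal_int measurableSet_Icc g2 g4 hs.1 ?_
      intro t ht
      have := ht.1; have := hx.1
      exact ⟨fun h1 => ⟨by linarith, h1⟩, fun h1 => h1.2⟩
  rw [hKt, mul_add, ENNReal.ofReal_mul (by norm_num : (0:ℝ) ≤ 2)]
  have h2 : ENNReal.ofReal 2 * ENNReal.ofReal C = ENNReal.ofReal C + ENNReal.ofReal C := by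
    rw [ENNReal.ofReal_ofNat, two_mul]
  rw [h2]
  simp only [ENNReal.mul_iSup]
  exact add_le_add (iSup₂_le half1) (iSup₂_le half2)
end
end

section
/- Let -∞ < a < b < ∞, 1 < p < ∞ with conjugate exponent p' = p/(p−1), let μ and w be weights on [a,b], and let Φ be a Young function that is submultiplicative and invertible on [0,∞) such that Λ(t) = Φ(t^{1/p}) is convex. Define S := sup_{a<x<b} { [Φ^{-1}(μ[x,b]^{-1/2})]^{-2} · (∫_a^x w(t)^{1−p'} dt)^{1/p'} }. If S < ∞, then for every f ∈ L_w^p[a,b], ‖ x ↦ ∫_a^x f(t) dt ‖_{L_μ^Φ[a,b]} ≤ C₀(Φ) · S · ‖f‖_{L_w^p[a,b]}, where C₀(Φ) := 2·[Φ^{-1}(1/2)]^{-1}. -/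
open MeasureTheory Set Filter
open scoped ENNReal NNReal

noncomputable section

lemma oh_mono_deriv {G g : ℝ → ℝ} {c d : ℝ} (hcd : c ≤ d) (hG : MonotoneOn G (Icc c d))
    (hg : ∀ᵐ t, t ∈ Ioo c d → HasDerivAt G (g t) t) :
    ∫⁻ t in Icc c d, ENNReal.ofReal (g t) ≤ ENNReal.ofReal (G d - G c) := by
  rw [← restrict_Ioo_eq_restrict_Icc]
  have h1 : ∫⁻ t in Ioo c d, ENNReal.ofReal (g t) = ∫⁻ t in Ioo c d, ENNReal.ofReal (deriv G t) := by
    apply setLIntegral_congr_fun_ae measurableSet_Ioo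
    filter_upwards [hg] with t ht htm
    rw [(ht htm).deriv]
  have hG' : MonotoneOn G (uIcc c d) := by rwa [uIcc_of_le hcd]
  have hint := hG'.intervalIntegrable_deriv
  have hmem := hG'.intervalIntegral_deriv_mem_uIcc
  have hGcd : G c ≤ G d := hG (left_mem_Icc.2 hcd) (right_mem_Icc.2 hcd) hcd
  rw [uIcc_of_le (by linarith)] at hmem
  rw [h1, ← ofReal_integral_eq_lintegral_ofReal]
  · apply ENNReal.ofReal_le_ofReal
    rw [← integral_Ioc_eq_integral_Ioo, ← intervalIntegral.integral_of_le hcd]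
    exact hmem.2
  · exact ((intervalIntegrable_iff_integrableOn_Ioo_of_le hcd).1 hint)
  · filter_upwards [ae_restrict_mem measurableSet_Ioo] with t ht
    have : derivWithin G (Icc c d) t = deriv G t := derivWithin_of_mem_nhds (Icc_mem_nhds ht.1 ht.2)
    rw [← this]
    exact hG.derivWithin_nonneg

lemma oh_toReal_eq {v : ℝ → ℝ} (hv : Measurable v) (hv0 : ∀ t, 0 ≤ v t) {c d : ℝ} (hcd : c ≤ d) :
    (∫⁻ s in Icc c d, ENNReal.ofReal (v s)).toReal = ∫ s in c..d, v s := by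
  rw [intervalIntegral.integral_of_le hcd, ← integral_Icc_eq_integral_Ioc,
    integral_eq_lintegral_of_nonneg_ae (Eventually.of_forall hv0) hv.aestronglyMeasurable]

lemma oh_intble {v : ℝ → ℝ} (hv : Measurable v) (hv0 : ∀ t, 0 ≤ v t) {c d : ℝ} (hcd : c ≤ d)
    (hfin : ∫⁻ s in Icc c d, ENNReal.ofReal (v s) ≠ ⊤) : IntervalIntegrable v volume c d := by
  rw [intervalIntegrable_iff_integrableOn_Icc_of_le hcd]
  refine ⟨hv.aestronglyMeasurable, ?_⟩
  rw [hasFiniteIntegral_iff_ofReal (Eventually.of_forall hv0)]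
  exact hfin.lt_top

lemma oh_pos {v : ℝ → ℝ} (hv : Measurable v) {c d : ℝ} (hcd : c < d)
    (hpos : ∀ᵐ t ∂(volume.restrict (Icc c d)), 0 < v t) :
    0 < ∫⁻ s in Icc c d, ENNReal.ofReal (v s) := by
  rw [pos_iff_ne_zero]
  intro h
  rw [lintegral_eq_zero_iff hv.ennreal_ofReal] at h
  have : ∀ᵐ t ∂(volume.restrict (Icc c d)), False := by
    filter_upwards [h, hpos] with t h1 h2
    simp at h1
    linarith
  rw [ae_iff] at this
  simp at this
  linarith

lemma oh_left {v : ℝ → ℝ} (hv : Measurable v) (hv0 : ∀ t, 0 ≤ v t) {c d : ℝ} (hcd : c < d)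
    (hpos : ∀ᵐ t ∂(volume.restrict (Icc c d)), 0 < v t)
    (hfin : ∫⁻ s in Icc c d, ENNReal.ofReal (v s) ≠ ⊤) :
    ∫⁻ t in Icc c d, ENNReal.ofReal (v t * (√((∫⁻ s in Icc c t, ENNReal.ofReal (v s)).toReal))⁻¹)
      ≤ ENNReal.ofReal (2 * √((∫⁻ s in Icc c d, ENNReal.ofReal (v s)).toReal)) := by
  have hint := oh_intble hv hv0 hcd.le hfin
  have key := oh_mono_deriv (G := fun t => 2 * √(∫ s in c..t, v s))
    (g := fun t => v t * (√((∫⁻ s in Icc c t, ENNReal.ofReal (v s)).toReal))⁻¹) hcd.le ?_ ?_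
  · rw [oh_toReal_eq hv hv0 hcd.le]
    simpa using key
  · intro x hx y hy hxy
    simp only
    gcongr 2 * √?_
    apply intervalIntegral.integral_mono_interval le_rfl hx.1 hxy (Eventually.of_forall hv0)
    exact hint.mono_set (by rw [uIcc_of_le hcd.le, uIcc_of_le hy.1]; exact Icc_subset_Icc_right hy.2)
  · filter_upwards [hint.ae_hasDerivAt_integral] with t ht htm
    rw [uIcc_of_le hcd.le] at ht
    have h := ht (Ioo_subset_Icc_self htm) c (left_mem_Icc.2 hcd.le)
    have hp : 0 < ∫ s in c..t, v s := by
      rw [← oh_toReal_eq hv hv0 htm.1.le]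
      apply ENNReal.toReal_pos
      · exact (oh_pos hv htm.1 (ae_restrict_of_ae_restrict_of_subset (Icc_subset_Icc_right htm.2.le) hpos)).ne'
      · exact ne_top_of_le_ne_top hfin (lintegral_mono_set (Icc_subset_Icc_right htm.2.le))
    rw [oh_toReal_eq hv hv0 htm.1.le]
    exact ((h.sqrt hp.ne').const_mul 2).congr_deriv (by ring)

lemma oh_right {v : ℝ → ℝ} (hv : Measurable v) (hv0 : ∀ t, 0 ≤ v t) {c d : ℝ} (hcd : c < d)
    (hpos : ∀ᵐ t ∂(volume.restrict (Icc c d)), 0 < v t)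
    (hfin : ∫⁻ s in Icc c d, ENNReal.ofReal (v s) ≠ ⊤) :
    ∫⁻ t in Icc c d, ENNReal.ofReal (v t * (√((∫⁻ s in Icc t d, ENNReal.ofReal (v s)).toReal))⁻¹)
      ≤ ENNReal.ofReal (2 * √((∫⁻ s in Icc c d, ENNReal.ofReal (v s)).toReal)) := by
  have hint := oh_intble hv hv0 hcd.le hfin
  have key := oh_mono_deriv (G := fun t => - (2 * √(∫ s in t..d, v s)))
    (g := fun t => v t * (√((∫⁻ s in Icc t d, ENNReal.ofReal (v s)).toReal))⁻¹) hcd.le ?_ ?_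
  · rw [oh_toReal_eq hv hv0 hcd.le]
    simpa using key
  · intro x hx y hy hxy
    simp only
    rw [neg_le_neg_iff]
    gcongr 2 * √?_
    apply intervalIntegral.integral_mono_interval hxy hy.2 le_rfl (Eventually.of_forall hv0)
    exact hint.mono_set (by rw [uIcc_of_le hcd.le, uIcc_of_le hx.2]; exact Icc_subset_Icc_left hx.1)
  · filter_upwards [hint.ae_hasDerivAt_integral] with t ht htm
    rw [uIcc_of_le hcd.le] at ht
    have h := (ht (Ioo_subset_Icc_self htm) d (right_mem_Icc.2 hcd.le)).neg
    have e : (fun x => ∫ s in x..d, v s) = -(fun x => ∫ s in d..x, v s) := by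
      funext x; simp [intervalIntegral.integral_symm x d]
    rw [← e] at h
    have hp : 0 < ∫ s in t..d, v s := by
      rw [← oh_toReal_eq hv hv0 htm.2.le]
      apply ENNReal.toReal_pos
      · exact (oh_pos hv htm.2 (ae_restrict_of_ae_restrict_of_subset (Icc_subset_Icc_left htm.1.le) hpos)).ne'
      · exact ne_top_of_le_ne_top hfin (lintegral_mono_set (Icc_subset_Icc_left htm.1.le))
    rw [oh_toReal_eq hv hv0 htm.2.le]
    exact ((h.sqrt hp.ne').const_mul 2).neg.congr_deriv (by ring)

/-- Jensen, for bounded nonnegative functions, in `lintegral` form. -/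
lemma oh_jensen {Ω : Type*} [MeasurableSpace Ω] (ν : Measure Ω) [IsProbabilityMeasure ν]
    {L : ℝ → ℝ} (hL : ConvexOn ℝ univ L) (hL0 : ∀ t, 0 ≤ L t)
    {u : Ω → ℝ} (hu : Measurable u) (hu0 : ∀ t, 0 ≤ u t) {B : ℝ} (huB : ∀ t, u t ≤ B) :
    ENNReal.ofReal (L (∫⁻ t, ENNReal.ofReal (u t) ∂ν).toReal) ≤ ∫⁻ t, ENNReal.ofReal (L (u t)) ∂ν := by
  have hc : ContinuousOn L univ := hL.continuousOn isOpen_univ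
  have hc' : Continuous L := continuousOn_univ.1 hc
  have hui : Integrable u ν := Integrable.of_bound hu.aestronglyMeasurable B
    (Eventually.of_forall fun t => by rw [Real.norm_of_nonneg (hu0 t)]; exact huB t)
  obtain ⟨C, hC⟩ := (isCompact_Icc (a := (0:ℝ)) (b := B)).exists_bound_of_continuousOn (f := L) hc'.continuousOn
  have hLi : Integrable (L ∘ u) ν := Integrable.of_bound (hc'.measurable.comp hu).aestronglyMeasurable C
    (Eventually.of_forall fun t => hC _ ⟨hu0 t, huB t⟩)
  have hof := ofReal_integral_eq_lintegral_ofReal hLi (Eventually.of_forall fun t => hL0 _)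
  simp only [Function.comp_apply] at hof
  have := hL.map_integral_le hc isClosed_univ (by simp) hui hLi
  rw [← integral_eq_lintegral_of_nonneg_ae (Eventually.of_forall hu0) hu.aestronglyMeasurable,
    ← hof]
  exact ENNReal.ofReal_le_ofReal this

lemma oh_holder {a x p pc : ℝ} (hax : a < x) (hpq : p.HolderConjugate pc) {w f : ℝ → ℝ}
    (hw : Measurable w) (hw0 : ∀ t, 0 ≤ w t)
    (hwpos : ∀ᵐ t ∂(volume.restrict (Icc a x)), 0 < w t) (hf : Measurable f)
    (hfin : ∫⁻ s in Icc a x, ENNReal.ofReal (w s ^ (1 - pc)) ≠ ⊤)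
    (V : ℝ → ℝ) (hVm : Measurable V)
    (hV : ∀ t, V t = (∫⁻ s in Icc a t, ENNReal.ofReal (w s ^ (1 - pc))).toReal) :
    ENNReal.ofReal |∫ t in a..x, f t| ≤
      (∫⁻ t in Icc a x, ENNReal.ofReal (|f t| ^ p * w t * (V t ^ (1 / (2 * pc))) ^ p)) ^ (1 / p) *
        ENNReal.ofReal ((2 * √(V x)) ^ (1 / pc)) := by
  have hp0 := hpq.pos
  have hpc0 := hpq.symm.pos
  have hvm : Measurable fun t => w t ^ (1 - pc) := hw.pow_const _
  have hv0 : ∀ t, 0 ≤ w t ^ (1 - pc) := fun t => Real.rpow_nonneg (hw0 t) _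
  have hvpos : ∀ᵐ t ∂(volume.restrict (Icc a x)), 0 < w t ^ (1 - pc) := by
    filter_upwards [hwpos] with t ht using Real.rpow_pos_of_pos ht _
  have hVpos : ∀ t ∈ Ioc a x, 0 < V t := by
    intro t ht
    rw [hV]
    apply ENNReal.toReal_pos
    · exact (oh_pos hvm ht.1 (ae_restrict_of_ae_restrict_of_subset (Icc_subset_Icc_right ht.2) hvpos)).ne'
    · exact ne_top_of_le_ne_top hfin (lintegral_mono_set (Icc_subset_Icc_right ht.2))
  have hV0 : ∀ t, 0 ≤ V t := fun t => by rw [hV]; positivity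
  set φ1 : ℝ → ℝ≥0∞ := fun t => ENNReal.ofReal (|f t| * w t ^ (1 / p) * V t ^ (1 / (2 * pc))) with hφ1
  set φ2 : ℝ → ℝ≥0∞ := fun t => ENNReal.ofReal (w t ^ (-(1 / p)) * V t ^ (-(1 / (2 * pc)))) with hφ2
  have hm1 : Measurable φ1 := by
    apply Measurable.ennreal_ofReal
    exact ((hf.abs.mul (hw.pow_const _)).mul (hVm.pow_const _))
  have hm2 : Measurable φ2 := by
    apply Measurable.ennreal_ofReal
    exact ((hw.pow_const _).mul (hVm.pow_const _))
  have hne : ∀ᵐ t ∂(volume.restrict (Icc a x)), t ≠ a :=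
    ae_restrict_of_ae (by simp [ae_iff, measure_singleton])
  have step1 : ENNReal.ofReal |∫ t in a..x, f t| ≤ ∫⁻ t in Icc a x, (φ1 * φ2) t := by
    rw [intervalIntegral.integral_of_le hax.le, ← integral_Icc_eq_integral_Ioc,
      ← Real.norm_eq_abs, ofReal_norm]
    refine (enorm_integral_le_lintegral_enorm _).trans (le_of_eq ?_)
    apply lintegral_congr_ae
    filter_upwards [hwpos, hne, ae_restrict_mem measurableSet_Icc] with t h1 h2 h3
    have hVt := hVpos t ⟨lt_of_le_of_ne h3.1 (Ne.symm h2), h3.2⟩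
    simp only [hφ1, hφ2, Pi.mul_apply]
    rw [← ENNReal.ofReal_mul (by positivity), ← ofReal_norm, Real.norm_eq_abs]
    congr 1
    rw [Real.rpow_neg h1.le, Real.rpow_neg hVt.le]
    have e1 : w t ^ (1 / p) ≠ 0 := by positivity
    have e2 : V t ^ (1 / (2 * pc)) ≠ 0 := by positivity
    generalize w t ^ (1 / p) = A at *
    generalize V t ^ (1 / (2 * pc)) = B at *
    field_simp
  refine step1.trans ?_
  refine (ENNReal.lintegral_mul_le_Lp_mul_Lq _ hpq hm1.aemeasurable hm2.aemeasurable).trans ?_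
  refine mul_le_mul' (ENNReal.rpow_le_rpow (lintegral_mono fun t => ?_) (by positivity)) ?_
  · apply le_of_eq
    simp only [hφ1]
    have := hw0 t
    have := hV0 t
    rw [ENNReal.ofReal_rpow_of_nonneg (by positivity) hp0.le, Real.mul_rpow (by positivity) (by positivity),
      Real.mul_rpow (by positivity) (by positivity), ← Real.rpow_mul (hw0 t), one_div_mul_cancel hp0.ne', Real.rpow_one]
  · have e : ∫⁻ t in Icc a x, φ2 t ^ pc ≤ ENNReal.ofReal (2 * √(V x)) := by
      rw [hV x]
      refine le_trans (le_of_eq ?_) (oh_left hvm hv0 hax hvpos hfin)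
      apply lintegral_congr_ae
      filter_upwards [hwpos, hne, ae_restrict_mem measurableSet_Icc] with t h1 h2 h3
      have hVt := hVpos t ⟨lt_of_le_of_ne h3.1 (Ne.symm h2), h3.2⟩
      simp only [hφ2]
      rw [ENNReal.ofReal_rpow_of_nonneg (by positivity) hpc0.le, Real.mul_rpow (by positivity) (by positivity),
        ← Real.rpow_mul h1.le, ← Real.rpow_mul hVt.le, ← hV t, Real.sqrt_eq_rpow, ← Real.rpow_neg hVt.le]
      congr 3
      · have h := hpq.inv_add_inv_eq_one
        have h3 : p⁻¹ = 1 - pc⁻¹ := by linarith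
        rw [one_div, h3]
        field_simp
        ring
      · field_simp
    refine (ENNReal.rpow_le_rpow e (by positivity)).trans ?_
    rw [ENNReal.ofReal_rpow_of_nonneg (by positivity) (by positivity)]

lemma oh_young_mono {Φ : ℝ → ℝ} (hc : ConvexOn ℝ univ Φ) (h0 : Φ 0 = 0) (hn : ∀ t, 0 ≤ Φ t)
    {s t : ℝ} (hs : 0 ≤ s) (hst : s ≤ t) : Φ s ≤ Φ t := by
  rcases eq_or_lt_of_le (hs.trans hst) with ht | ht
  · have : s = t := by linarith
    rw [this]
  · have h := hc.2 (mem_univ 0) (mem_univ t)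
      (show (0:ℝ) ≤ 1 - s / t by rw [sub_nonneg, div_le_one ht]; exact hst)
      (show (0:ℝ) ≤ s / t by positivity) (by ring)
    simp only [smul_eq_mul, mul_zero, zero_add, h0] at h
    rw [div_mul_cancel₀ _ ht.ne'] at h
    refine h.trans ?_
    have : s / t ≤ 1 := (div_le_one ht).2 hst
    nlinarith [hn t]

/-- The pointwise bound on the kernel. -/
lemma oh_kernel {Φ Φinv : ℝ → ℝ} (hc : ConvexOn ℝ univ Φ) (h0 : Φ 0 = 0) (hn : ∀ t, 0 ≤ Φ t)
    (hsub : ∀ s t : ℝ, 0 ≤ s → 0 ≤ t → Φ (s * t) ≤ Φ s * Φ t)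
    (hi0 : ∀ t, 0 ≤ t → 0 ≤ Φinv t) (hi1 : ∀ t, 0 ≤ t → Φ (Φinv t) = t)
    {S pc Wt Wx mt mx : ℝ} (hS : 0 < S) (hpc : 1 ≤ pc) (hWt : 0 ≤ Wt) (hWx : 0 ≤ Wx)
    (hmt : 0 ≤ mt) (hmx : 0 ≤ mx)
    (ht : Wt ^ (1 / pc) ≤ S * Φinv mt ^ 2) (hx : Wx ^ (1 / pc) ≤ S * Φinv mx ^ 2) :
    Φ (Wt ^ (1 / (2 * pc)) * (2 * √Wx) ^ (1 / pc) / (2 * (Φinv (1 / 2))⁻¹ * S)) ≤ 1 / 2 * mx * mt := by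
  have key : ∀ W m : ℝ, 0 ≤ W → 0 ≤ m → W ^ (1 / pc) ≤ S * Φinv m ^ 2 →
      W ^ (1 / (2 * pc)) ≤ √S * Φinv m := by
    intro W m hW hm h
    have h1 : W ^ (1 / (2 * pc)) = √(W ^ (1 / pc)) := by
      rw [Real.sqrt_eq_rpow, ← Real.rpow_mul hW]; congr 1; field_simp
    rw [h1]
    refine (Real.sqrt_le_sqrt h).trans ?_
    rw [Real.sqrt_mul hS.le, Real.sqrt_sq (hi0 m hm)]
  have k1 := key Wt mt hWt hmt ht
  have k2 := key Wx mx hWx hmx hx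
  have k3 : (2 * √Wx) ^ (1 / pc) ≤ 2 * (√S * Φinv mx) := by
    rw [Real.mul_rpow (by norm_num) (by positivity)]
    have e : √Wx ^ (1 / pc) = Wx ^ (1 / (2 * pc)) := by
      rw [Real.sqrt_eq_rpow, ← Real.rpow_mul hWx]; congr 1; field_simp
    rw [e]
    have e2 : (2:ℝ) ^ (1 / pc) ≤ 2 := by
      calc (2:ℝ) ^ (1 / pc) ≤ 2 ^ (1:ℝ) := Real.rpow_le_rpow_of_exponent_le (by norm_num)
            (by rw [div_le_one (by linarith)]; exact hpc)
        _ = 2 := Real.rpow_one _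
    gcongr
  have hh : 0 ≤ Φinv (1 / 2) := hi0 _ (by norm_num)
  have hmt' := hi0 mt hmt
  have hmx' := hi0 mx hmx
  have hb : Wt ^ (1 / (2 * pc)) * (2 * √Wx) ^ (1 / pc) / (2 * (Φinv (1 / 2))⁻¹ * S)
      ≤ Φinv (1 / 2) * Φinv mx * Φinv mt := by
    calc _ ≤ (√S * Φinv mt) * (2 * (√S * Φinv mx)) / (2 * (Φinv (1 / 2))⁻¹ * S) := by gcongr
      _ = (√S * √S) * (2 * Φinv mt * Φinv mx) / (2 * (Φinv (1 / 2))⁻¹ * S) := by ring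
      _ = Φinv (1 / 2) * Φinv mx * Φinv mt := by
        rw [Real.mul_self_sqrt hS.le]
        have hne : Φinv (1 / 2) ≠ 0 := by
          intro h
          have := hi1 (1 / 2) (by norm_num)
          rw [h, h0] at this
          norm_num at this
        generalize Φinv (1 / 2) = q at *
        field_simp
  refine (oh_young_mono hc h0 hn (by positivity) hb).trans ?_
  refine (hsub _ _ (by positivity) hmt').trans ?_
  rw [hi1 mt hmt]
  gcongr
  refine (hsub _ _ hh hmx').trans ?_
  rw [hi1 mx hmx, hi1 _ (by norm_num)]

lemma oh_core {a b p pc : ℝ} (hpq : p.HolderConjugate pc) {Φ Φinv μ w f : ℝ → ℝ}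
    (hc : ConvexOn ℝ univ Φ) (hev : ∀ t, Φ (-t) = Φ t) (h0 : Φ 0 = 0) (hn : ∀ t, 0 ≤ Φ t)
    (hsub : ∀ s t : ℝ, 0 ≤ s → 0 ≤ t → Φ (s * t) ≤ Φ s * Φ t)
    (hi0 : ∀ t, 0 ≤ t → 0 ≤ Φinv t) (hi1 : ∀ t, 0 ≤ t → Φ (Φinv t) = t)
    (hΛ : ConvexOn ℝ univ (fun t => Φ (|t| ^ (1 / p))))
    (hμ : Measurable μ) (hμ0 : ∀ t, 0 ≤ μ t)
    (hμpos : ∀ᵐ t ∂(volume.restrict (Icc a b)), 0 < μ t)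
    (hw : Measurable w) (hw0 : ∀ t, 0 ≤ w t)
    (hwpos : ∀ᵐ t ∂(volume.restrict (Icc a b)), 0 < w t)
    (V M : ℝ → ℝ) (hVm : Measurable V) (hMm : Measurable M)
    (hV : ∀ t, V t = (∫⁻ s in Icc a t, ENNReal.ofReal (w s ^ (1 - pc))).toReal)
    (hM : ∀ t, M t = (∫⁻ s in Icc t b, ENNReal.ofReal (μ s)).toReal)
    (hVfin : ∀ t ∈ Ioo a b, ∫⁻ s in Icc a t, ENNReal.ofReal (w s ^ (1 - pc)) ≠ ⊤)
    (hMfin : ∀ t ∈ Ioo a b, ∫⁻ s in Icc t b, ENNReal.ofReal (μ s) ≠ ⊤)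
    {S : ℝ} (hS : 0 < S)
    (hbd : ∀ t ∈ Ioo a b, V t ^ (1 / pc) ≤ S * Φinv ((√(M t))⁻¹) ^ 2)
    (hf : Measurable f)
    (hG : ∫⁻ t in Icc a b, ENNReal.ofReal (|f t| ^ p * w t) ≠ ⊤)
    {c : ℝ} (hc0 : 0 < c)
    (hcG : ENNReal.ofReal (2 * (Φinv (1 / 2))⁻¹ * S) *
      (∫⁻ t in Icc a b, ENNReal.ofReal (|f t| ^ p * w t)) ^ (1 / p) ≤ ENNReal.ofReal c) :
    ∫⁻ x in Icc a b, ENNReal.ofReal (Φ ((∫ t in a..x, f t) / c) * μ x) ≤ 1 := by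
  have hp0 := hpq.pos
  have hpc0 := hpq.symm.pos
  have hpc1 : 1 ≤ pc := hpq.symm.lt.le
  have hV0 : ∀ t, 0 ≤ V t := fun t => by rw [hV]; positivity
  have hM0 : ∀ t, 0 ≤ M t := fun t => by rw [hM]; positivity
  have hIoo : ∀ᵐ t ∂(volume.restrict (Icc a b)), t ∈ Ioo a b := by
    rw [← restrict_Ioo_eq_restrict_Icc]
    exact ae_restrict_mem measurableSet_Ioo
  have hholder : ∀ x ∈ Ioo a b, _ := fun x hx =>
    oh_holder hx.1 hpq hw hw0 (ae_restrict_of_ae_restrict_of_subset (Icc_subset_Icc_right hx.2.le) hwpos)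
      hf (hVfin x hx) V hVm hV
  set g : ℝ → ℝ := fun t => |f t| ^ p * w t with hg
  have hg0 : ∀ t, 0 ≤ g t := fun t => mul_nonneg (Real.rpow_nonneg (abs_nonneg _) _) (hw0 t)
  have hgm : Measurable g := (hf.abs.pow_const _).mul hw
  set G := ∫⁻ t in Icc a b, ENNReal.ofReal (|f t| ^ p * w t) with hGdef
  have hhalf : 0 < Φinv (1 / 2) := by
    refine lt_of_le_of_ne (hi0 _ (by norm_num)) fun h => ?_
    have := hi1 (1 / 2) (by norm_num)
    rw [← h, h0] at this
    norm_num at this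
  set A := 2 * (Φinv (1 / 2))⁻¹ * S with hA
  have hA0 : 0 < A := by positivity
  set h : ℝ → ℝ := fun t => V t ^ (1 / (2 * pc)) with hh
  have hhm : Measurable h := hVm.pow_const _
  have hh0 : ∀ t, 0 ≤ h t := fun t => Real.rpow_nonneg (hV0 t) _
  set K : ℝ → ℝ := fun t => (2 * √(V t)) ^ (1 / pc) with hK
  have hK0 : ∀ t, 0 ≤ K t := fun t => by positivity
  by_cases hGz : G = 0
  · have hgz : ∀ᵐ t ∂(volume.restrict (Icc a b)), ENNReal.ofReal (g t) = 0 := by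
      rw [hGdef, lintegral_eq_zero_iff hgm.ennreal_ofReal] at hGz
      exact hGz
    have : ∫⁻ x in Icc a b, ENNReal.ofReal (Φ ((∫ t in a..x, f t) / c) * μ x) = 0 := by
      rw [← lintegral_zero (μ := volume.restrict (Icc a b))]
      apply lintegral_congr_ae
      filter_upwards [hIoo] with x hx
      have h1 := hholder x hx
      have h2 : ∫⁻ t in Icc a x, ENNReal.ofReal (g t * (h t) ^ p) = 0 := by
        rw [← lintegral_zero (μ := volume.restrict (Icc a x))]
        apply lintegral_congr_ae
        filter_upwards [ae_restrict_of_ae_restrict_of_subset (Icc_subset_Icc_right hx.2.le) hgz] with t ht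
        rw [ENNReal.ofReal_mul (hg0 t), ht, zero_mul]
      have h3 : (∫⁻ t in Icc a x, ENNReal.ofReal (|f t| ^ p * w t * (V t ^ (1 / (2 * pc))) ^ p)) = 0 := h2
      rw [h3, ENNReal.zero_rpow_of_pos (by positivity), zero_mul] at h1
      have h4 : (∫ t in a..x, f t) = 0 := by
        have := ENNReal.ofReal_eq_zero.1 (le_antisymm h1 bot_le)
        exact abs_eq_zero.1 (le_antisymm this (abs_nonneg _))
      rw [h4]
      simp [h0]
    rw [this]
    exact zero_le_one
  -- the probability measure
  set ν : Measure ℝ := G⁻¹ • (volume.restrict (Icc a b)).withDensity (fun t => ENNReal.ofReal (g t)) with hν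
  have hνp : IsProbabilityMeasure ν := by
    constructor
    rw [hν, Measure.smul_apply, withDensity_apply _ MeasurableSet.univ, Measure.restrict_univ, smul_eq_mul]
    exact ENNReal.inv_mul_cancel hGz hG
  have hνac : ν ≪ volume.restrict (Icc a b) :=
    (Measure.smul_absolutelyContinuous).trans (withDensity_absolutelyContinuous _ _)
  have hνint : ∀ q : ℝ → ℝ≥0∞, Measurable q →
      ∫⁻ t, q t ∂ν = G⁻¹ * ∫⁻ t in Icc a b, ENNReal.ofReal (g t) * q t := by
    intro q hq
    rw [hν, lintegral_smul_measure, lintegral_withDensity_eq_lintegral_mul _ hgm.ennreal_ofReal hq]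
    rfl
  set Q : ℝ → ℝ → ℝ≥0∞ := fun x t =>
    if t ≤ x then ENNReal.ofReal (μ x * (√(M x))⁻¹) * ENNReal.ofReal (1 / 2 * (√(M t))⁻¹) else 0 with hQ
  have hQm : Measurable (Function.uncurry Q) := by
    simp only [hQ, Function.uncurry_def]
    apply Measurable.ite
    · exact measurableSet_le measurable_snd measurable_fst
    · refine Measurable.mul (f := fun x : ℝ × ℝ => ENNReal.ofReal (μ x.1 * (√(M x.1))⁻¹))
        (g := fun x : ℝ × ℝ => ENNReal.ofReal (1 / 2 * (√(M x.2))⁻¹)) ?_ ?_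
      · exact ((hμ.mul (hMm.sqrt.inv)).comp measurable_fst).ennreal_ofReal
      · exact (((hMm.sqrt.inv).const_mul (1/2)).comp measurable_snd).ennreal_ofReal
    · exact measurable_const
  have hVmono : ∀ x ∈ Ioo a b, ∀ t ≤ x, V t ≤ V x := by
    intro x hx t htx
    rw [hV, hV]
    exact ENNReal.toReal_mono (hVfin x hx) (lintegral_mono_set (Icc_subset_Icc_right htx))
  have hpt : ∀ x ∈ Ioo a b, ENNReal.ofReal (Φ ((∫ t in a..x, f t) / c) * μ x) ≤ ∫⁻ t, Q x t ∂ν := by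
    intro x hx
    set F := ∫ t in a..x, f t with hF
    set u : ℝ → ℝ := fun t => if t ≤ x then (h t * K x / A) ^ p else 0 with hu
    have hum : Measurable u := by
      apply Measurable.ite measurableSet_Iic _ measurable_const
      exact ((hhm.mul_const _).div_const _).pow_const _
    have hu0 : ∀ t, 0 ≤ u t := by
      intro t
      simp only [hu]
      split_ifs
      · exact Real.rpow_nonneg (div_nonneg (mul_nonneg (hh0 t) (hK0 x)) hA0.le) _
      · exact le_rfl
    have huB : ∀ t, u t ≤ (h x * K x / A) ^ p := by
      intro t
      simp only [hu]
      split_ifs with htx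
      · have : h t ≤ h x := Real.rpow_le_rpow (hV0 t) (hVmono x hx t htx) (by positivity)
        have := hK0 x
        have := hh0 t
        gcongr
      · exact Real.rpow_nonneg (div_nonneg (mul_nonneg (hh0 x) (hK0 x)) hA0.le) _
    have hJ := oh_jensen ν hΛ (fun t => hn _) hum hu0 huB
    have hfinU : ∫⁻ t, ENNReal.ofReal (u t) ∂ν ≠ ⊤ := by
      have : ∫⁻ t, ENNReal.ofReal (u t) ∂ν ≤ ∫⁻ t, ENNReal.ofReal ((h x * K x / A) ^ p) ∂ν :=
        lintegral_mono fun t => ENNReal.ofReal_le_ofReal (huB t)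
      rw [lintegral_const, measure_univ, mul_one] at this
      exact ne_top_of_le_ne_top ENNReal.ofReal_ne_top this
    -- compute the integral of `u`
    have hUval : ∫⁻ t, ENNReal.ofReal (u t) ∂ν = G⁻¹ * (ENNReal.ofReal ((K x / A) ^ p) *
        ∫⁻ t in Icc a x, ENNReal.ofReal (g t * h t ^ p)) := by
      rw [hνint _ hum.ennreal_ofReal]
      congr 1
      have hKA : 0 ≤ K x / A := div_nonneg (hK0 x) hA0.le
      rw [← lintegral_const_mul _ (show Measurable fun t => ENNReal.ofReal (g t * h t ^ p) from
        (hgm.mul (hhm.pow_const _)).ennreal_ofReal)]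
      have hsplit : Icc a x = Iic x ∩ Icc a b := by
        ext t; simp only [mem_Icc, mem_inter_iff, mem_Iic]
        constructor
        · rintro ⟨h1, h2⟩; exact ⟨h2, h1, h2.trans hx.2.le⟩
        · rintro ⟨h1, h2, h3⟩; exact ⟨h2, h1⟩
      rw [hsplit, ← Measure.restrict_restrict measurableSet_Iic, ← lintegral_indicator measurableSet_Iic]
      refine lintegral_congr fun t => ?_
      simp only [hu, indicator, mem_Iic]
      split_ifs
      · rw [← ENNReal.ofReal_mul (hg0 t), ← ENNReal.ofReal_mul (Real.rpow_nonneg hKA _),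
          mul_div_assoc, Real.mul_rpow (hh0 t) hKA]
        congr 1
        ring
      · simp
    have hFle : ENNReal.ofReal ((|F| / c) ^ p) ≤ ∫⁻ t, ENNReal.ofReal (u t) ∂ν := by
      rw [hUval]
      set I := ∫⁻ t in Icc a x, ENNReal.ofReal (g t * h t ^ p) with hI
      have h1 : ENNReal.ofReal |F| ≤ I ^ (1 / p) * ENNReal.ofReal (K x) := hholder x hx
      have h2 : ENNReal.ofReal (|F| ^ p) ≤ I * ENNReal.ofReal (K x ^ p) := by
        have := ENNReal.rpow_le_rpow h1 hp0.le
        rw [ENNReal.mul_rpow_of_nonneg _ _ hp0.le, ← ENNReal.rpow_mul, one_div_mul_cancel hp0.ne', ENNReal.rpow_one,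
          ENNReal.ofReal_rpow_of_nonneg (abs_nonneg _) hp0.le, ENNReal.ofReal_rpow_of_nonneg (hK0 x) hp0.le] at this
        exact this
      have h3 : ENNReal.ofReal (A ^ p) * G ≤ ENNReal.ofReal (c ^ p) := by
        have := ENNReal.rpow_le_rpow hcG hp0.le
        rw [ENNReal.mul_rpow_of_nonneg _ _ hp0.le, ← ENNReal.rpow_mul, one_div_mul_cancel hp0.ne', ENNReal.rpow_one,
          ENNReal.ofReal_rpow_of_nonneg hA0.le hp0.le, ENNReal.ofReal_rpow_of_nonneg hc0.le hp0.le] at this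
        exact this
      have hAp : 0 < A ^ p := Real.rpow_pos_of_pos hA0 _
      have hcp : 0 < c ^ p := Real.rpow_pos_of_pos hc0 _
      rw [Real.div_rpow (abs_nonneg _) hc0.le, Real.div_rpow (hK0 x) hA0.le, ENNReal.ofReal_div_of_pos hcp,
        ENNReal.ofReal_div_of_pos hAp]
      calc _ ≤ (I * ENNReal.ofReal (K x ^ p)) / (ENNReal.ofReal (A ^ p) * G) := ENNReal.div_le_div h2 h3
        _ = _ := by
          rw [div_eq_mul_inv, div_eq_mul_inv, ENNReal.mul_inv (Or.inr hG) (Or.inr hGz)]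
          ring
    have hFle' : |F| / c ≤ (∫⁻ t, ENNReal.ofReal (u t) ∂ν).toReal ^ (1 / p) := by
      have h1 := (ENNReal.ofReal_le_iff_le_toReal hfinU).1 hFle
      have h2 := Real.rpow_le_rpow (by positivity) h1 (show 0 ≤ 1 / p by positivity)
      rwa [← Real.rpow_mul (by positivity), mul_one_div_cancel hp0.ne', Real.rpow_one] at h2
    have hΦF : Φ (F / c) ≤ Φ (|(∫⁻ t, ENNReal.ofReal (u t) ∂ν).toReal| ^ (1 / p)) := by
      have e : Φ (F / c) = Φ (|F| / c) := by
        rcases abs_choice F with h | h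
        · rw [h]
        · rw [h, neg_div, hev]
      rw [e, abs_of_nonneg ENNReal.toReal_nonneg]
      exact oh_young_mono hc h0 hn (by positivity) hFle'
    rw [mul_comm, ENNReal.ofReal_mul (hμ0 x)]
    have hQx : ∀ᵐ t ∂ν, ENNReal.ofReal (μ x) * ENNReal.ofReal (Φ (|u t| ^ (1 / p))) ≤ Q x t := by
      filter_upwards [hνac.ae_le hIoo] with t ht
      rw [abs_of_nonneg (hu0 t)]
      simp only [hu, hQ]
      split_ifs with htx
      · have hb0 : 0 ≤ h t * K x / A := div_nonneg (mul_nonneg (hh0 t) (hK0 x)) hA0.le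
        rw [← Real.rpow_mul hb0, mul_one_div_cancel hp0.ne', Real.rpow_one]
        have hk := oh_kernel hc h0 hn hsub hi0 hi1 hS hpc1 (hV0 t) (hV0 x)
          (mt := (√(M t))⁻¹) (mx := (√(M x))⁻¹) (by positivity) (by positivity) (hbd t ht) (hbd x hx)
        rw [← ENNReal.ofReal_mul (hμ0 x), ← ENNReal.ofReal_mul (mul_nonneg (hμ0 x) (by positivity))]
        apply ENNReal.ofReal_le_ofReal
        calc _ ≤ μ x * (1 / 2 * (√(M x))⁻¹ * (√(M t))⁻¹) := mul_le_mul_of_nonneg_left hk (hμ0 x)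
          _ = _ := by ring
      · rw [Real.zero_rpow (by positivity), h0]
        simp
    have hΛc : Measurable fun t : ℝ => Φ (|t| ^ (1 / p)) :=
      (continuousOn_univ.1 (hΛ.continuousOn isOpen_univ)).measurable
    calc _ ≤ ENNReal.ofReal (μ x) * ∫⁻ t, ENNReal.ofReal (Φ (|u t| ^ (1 / p))) ∂ν := by
          gcongr
          exact (ENNReal.ofReal_le_ofReal hΦF).trans hJ
      _ = ∫⁻ t, ENNReal.ofReal (μ x) * ENNReal.ofReal (Φ (|u t| ^ (1 / p))) ∂ν := by
          rw [lintegral_const_mul _ (show Measurable fun t => ENNReal.ofReal (Φ (|u t| ^ (1 / p))) from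
            (hΛc.comp hum).ennreal_ofReal)]
      _ ≤ _ := lintegral_mono_ae hQx
  calc _ ≤ ∫⁻ x in Icc a b, ∫⁻ t, Q x t ∂ν := by
        apply lintegral_mono_ae
        filter_upwards [hIoo] with x hx using hpt x hx
    _ = ∫⁻ t, (∫⁻ x in Icc a b, Q x t) ∂ν := lintegral_lintegral_swap hQm.aemeasurable
    _ ≤ ∫⁻ t, 1 ∂ν := by
        apply lintegral_mono_ae
        filter_upwards [hνac.ae_le hIoo] with t ht
        have hMt : 0 < M t := by
          rw [hM]
          exact ENNReal.toReal_pos (oh_pos hμ ht.2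
            (ae_restrict_of_ae_restrict_of_subset (Icc_subset_Icc_left ht.1.le) hμpos)).ne' (hMfin t ht)
        have hr := oh_right hμ hμ0 ht.2
            (ae_restrict_of_ae_restrict_of_subset (Icc_subset_Icc_left ht.1.le) hμpos) (hMfin t ht)
        simp only [← hM] at hr
        have e : ∫⁻ x in Icc a b, Q x t = (∫⁻ x in Icc t b, ENNReal.ofReal (μ x * (√(M x))⁻¹)) *
            ENNReal.ofReal (1 / 2 * (√(M t))⁻¹) := by
          rw [← lintegral_mul_const _ (show Measurable fun x => ENNReal.ofReal (μ x * (√(M x))⁻¹) from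
            (hμ.mul hMm.sqrt.inv).ennreal_ofReal)]
          have hsplit : Icc t b = Ici t ∩ Icc a b := by
            ext s; simp only [mem_Icc, mem_inter_iff, mem_Ici]
            constructor
            · rintro ⟨h1, h2⟩; exact ⟨h1, ht.1.le.trans h1, h2⟩
            · rintro ⟨h1, h2, h3⟩; exact ⟨h1, h3⟩
          rw [hsplit, ← Measure.restrict_restrict measurableSet_Ici, ← lintegral_indicator measurableSet_Ici]
          refine lintegral_congr fun s => ?_
          simp only [hQ, indicator, mem_Ici]
        rw [e]
        calc _ ≤ ENNReal.ofReal (2 * √(M t)) * ENNReal.ofReal (1 / 2 * (√(M t))⁻¹) := by gcongr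
          _ = 1 := by
            rw [← ENNReal.ofReal_mul (by positivity)]
            have : √(M t) ≠ 0 := (Real.sqrt_pos.2 hMt).ne'
            rw [show 2 * √(M t) * (1 / 2 * (√(M t))⁻¹) = 1 by field_simp]
            simp
    _ = 1 := by simp

/-- Orlicz–Hardy inequality for `x ↦ ∫ₐ^x f`: if `S < ∞` then
`‖∫ₐ^• f‖_{L_μ^Φ[a,b]} ≤ C₀(Φ) S ‖f‖_{L_w^p[a,b]}`. -/
theorem orlicz_hardy_left
    (a b : ℝ) (hab : a < b) (p pc : ℝ) (hp : 1 < p) (hpc : pc = p / (p - 1))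
    (Φ Φinv μ w : ℝ → ℝ)
    (hΦ : IsYoung Φ) (hsub : Submult Φ) (hinv : IsYoungInv Φ Φinv)
    (hΛ : ConvexOn ℝ Set.univ (fun t => Φ (|t| ^ (1 / p))))
    (hμ : IsWeight μ a b) (hw : IsWeight w a b)
    (S : ℝ≥0∞)
    (hS : S = ⨆ x ∈ Set.Ioo a b,
      ((ENNReal.ofReal (Φinv ((wInt μ x b).toReal ^ (-(1/2) : ℝ)))) ^ 2)⁻¹ *
        (∫⁻ t in Set.Icc a x, ENNReal.ofReal (w t ^ (1 - pc))) ^ (1 / pc))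
    (hSfin : S < ⊤) :
    ∀ f : ℝ → ℝ, Measurable f →
      (∫⁻ t in Set.Icc a b, ENNReal.ofReal (|f t| ^ p * w t)) < ⊤ →
      luxNorm Φ μ a b (fun x => ∫ t in a..x, f t)
        ≤ ENNReal.ofReal (2 * (Φinv (1/2))⁻¹) * S * lpNorm w p a b f := by
  intro f hf hG
  obtain ⟨hc, hev, h0, hn, -⟩ := hΦ
  obtain ⟨hi0, hi1, hi2⟩ := hinv
  obtain ⟨hμm, hμ0, hμpos⟩ := hμ
  obtain ⟨hwm, hw0, hwpos⟩ := hw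
  have hpq : p.HolderConjugate pc := by
    rw [hpc]; exact Real.HolderConjugate.conjExponent hp
  have hpc0 : 0 < pc := hpq.symm.pos
  have hinv0 : Φinv 0 = 0 := by
    have := hi2 0 le_rfl
    rwa [h0] at this
  set Wf : ℝ → ℝ≥0∞ := fun x => ∫⁻ t in Set.Icc a x, ENNReal.ofReal (w t ^ (1 - pc)) with hWf
  set Mf : ℝ → ℝ≥0∞ := fun x => ∫⁻ t in Set.Icc x b, ENNReal.ofReal (μ t) with hMf
  have hvpos : ∀ᵐ t ∂(volume.restrict (Icc a b)), 0 < w t ^ (1 - pc) := by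
    filter_upwards [hwpos] with t ht using Real.rpow_pos_of_pos ht _
  have hWpos : ∀ x ∈ Ioo a b, 0 < Wf x := fun x hx => oh_pos (hwm.pow_const _) hx.1
    (ae_restrict_of_ae_restrict_of_subset (Icc_subset_Icc_right hx.2.le) hvpos)
  have hMpos : ∀ x ∈ Ioo a b, 0 < Mf x := fun x hx => oh_pos hμm hx.2
    (ae_restrict_of_ae_restrict_of_subset (Icc_subset_Icc_left hx.1.le) hμpos)
  have hle : ∀ x ∈ Ioo a b, ((ENNReal.ofReal (Φinv ((Mf x).toReal ^ (-(1/2) : ℝ)))) ^ 2)⁻¹ *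
      (Wf x) ^ (1 / pc) ≤ S := by
    intro x hx
    rw [hS]
    exact le_iSup₂ (f := fun x (_ : x ∈ Set.Ioo a b) =>
      ((ENNReal.ofReal (Φinv ((wInt μ x b).toReal ^ (-(1/2) : ℝ)))) ^ 2)⁻¹ *
        (∫⁻ t in Set.Icc a x, ENNReal.ofReal (w t ^ (1 - pc))) ^ (1 / pc)) x hx
  have hWpow : ∀ x ∈ Ioo a b, (Wf x) ^ (1 / pc) ≠ 0 := by
    intro x hx h
    rw [ENNReal.rpow_eq_zero_iff_of_pos (by positivity)] at h
    exact (hWpos x hx).ne' h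
  have hMfin : ∀ x ∈ Ioo a b, Mf x ≠ ⊤ := by
    intro x hx h
    have := hle x hx
    rw [h, ENNReal.toReal_top, Real.zero_rpow (by norm_num), hinv0] at this
    simp only [ENNReal.ofReal_zero, ne_eq, OfNat.ofNat_ne_zero, not_false_eq_true, zero_pow,
      ENNReal.inv_zero] at this
    rw [ENNReal.top_mul (hWpow x hx)] at this
    exact absurd hSfin (not_lt.2 this)
  have hinvne : ∀ x, ((ENNReal.ofReal (Φinv ((Mf x).toReal ^ (-(1/2) : ℝ)))) ^ 2)⁻¹ ≠ 0 := by
    intro x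
    exact ENNReal.inv_ne_zero.2 (ENNReal.pow_ne_top ENNReal.ofReal_ne_top)
  have hWfin : ∀ x ∈ Ioo a b, Wf x ≠ ⊤ := by
    intro x hx h
    have := hle x hx
    rw [h, ENNReal.top_rpow_of_pos (by positivity), ENNReal.mul_top (hinvne x)] at this
    exact absurd hSfin (not_lt.2 this)
  have hSne : S ≠ 0 := by
    intro h
    have hx : (a + b) / 2 ∈ Ioo a b := ⟨by linarith, by linarith⟩
    have := hle _ hx
    rw [h, nonpos_iff_eq_zero, mul_eq_zero] at this
    exact this.elim (hinvne _) (hWpow _ hx)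
  have hSr : 0 < S.toReal := ENNReal.toReal_pos hSne hSfin.ne
  have hWm : Measurable Wf := by
    apply Monotone.measurable
    intro x y hxy
    exact lintegral_mono_set (Icc_subset_Icc_right hxy)
  have hMm : Measurable Mf := by
    apply Antitone.measurable
    intro x y hxy
    exact lintegral_mono_set (Icc_subset_Icc_left hxy)
  have hbd : ∀ t ∈ Ioo a b, (Wf t).toReal ^ (1 / pc) ≤ S.toReal * Φinv ((√((Mf t).toReal))⁻¹) ^ 2 := by
    intro t ht
    have hMr : 0 < (Mf t).toReal := ENNReal.toReal_pos (hMpos t ht).ne' (hMfin t ht)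
    have e : (√((Mf t).toReal))⁻¹ = (Mf t).toReal ^ (-(1/2) : ℝ) := by
      rw [Real.sqrt_eq_rpow, Real.rpow_neg hMr.le]
    rw [e]
    have hm0 : 0 < (Mf t).toReal ^ (-(1/2) : ℝ) := Real.rpow_pos_of_pos hMr _
    have h1 := hle t ht
    have hφ : 0 < Φinv ((Mf t).toReal ^ (-(1/2) : ℝ)) := by
      refine lt_of_le_of_ne (hi0 _ hm0.le) fun h => ?_
      have := hi1 _ hm0.le
      rw [← h, h0] at this
      linarith
    generalize Φinv ((Mf t).toReal ^ (-(1/2) : ℝ)) = q at *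
    rw [mul_comm, ← div_eq_mul_inv, ENNReal.div_le_iff (by simp [hφ]) (ENNReal.pow_ne_top ENNReal.ofReal_ne_top)] at h1
    have h2 := ENNReal.toReal_mono (ENNReal.mul_ne_top hSfin.ne (ENNReal.pow_ne_top ENNReal.ofReal_ne_top)) h1
    rw [ENNReal.toReal_mul, ENNReal.toReal_pow, ENNReal.toReal_ofReal hφ.le, ← ENNReal.toReal_rpow] at h2
    exact h2
  apply le_of_forall_gt
  intro d hd
  obtain ⟨c', hc1, hc2⟩ := exists_between hd
  have hc'top : c' ≠ ⊤ := (lt_of_lt_of_le hc2 le_top).ne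
  have hc'0 : 0 < c'.toReal := ENNReal.toReal_pos (bot_le.trans_lt hc1).ne' hc'top
  refine lt_of_le_of_lt ?_ hc2
  apply sInf_le
  refine ⟨c'.toReal, hc'0, (ENNReal.ofReal_toReal hc'top).symm, ?_⟩
  refine oh_core hpq hc hev h0 hn hsub hi0 hi1 hΛ hμm hμ0 hμpos hwm hw0 hwpos
    (fun t => (Wf t).toReal) (fun t => (Mf t).toReal) hWm.ennreal_toReal hMm.ennreal_toReal
    (fun _ => rfl) (fun _ => rfl) hWfin hMfin hSr hbd hf hG.ne hc'0 ?_
  rw [ENNReal.ofReal_toReal hc'top]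
  refine le_trans (le_of_eq ?_) hc1.le
  rw [ENNReal.ofReal_mul (by have := hi0 (1/2) (by norm_num); positivity), ENNReal.ofReal_toReal hSfin.ne]
  rfl
end
end
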